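/- arXiv:1303.0503 — 9 statements merged into one kernel-verified Lean document; each statement's English description precedes it below -/
import Mathlib

section
/- Let p = 3, m a positive integer, and q = p^m. Then Σ_{(α,β,γ) ∈ F_q³} S(α,β,γ)⁵ = (5(p^m − 1)(8p^m − 2p − 10) + 1)·p^{3m}. -/
open Complex Finset

noncomputable def zetaPow (p : ℕ) (a : ZMod p) : ℂ :=
  Complex.exp (2 * Real.pi * Complex.I * (a.val : ℂ) / (p : ℂ))

noncomputable def expSum (p m : ℕ) [Fact p.Prime]
    (α β γ : GaloisField p m) : ℂ :=
  letI : Fintype (GaloisField p m) := Fintype.ofFinite _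
  ∑ x : GaloisField p m,
    zetaPow p ((Algebra.trace (ZMod p) (GaloisField p m))
      (α * x ^ 2 + β * x ^ (p + 1) + γ * x ^ (p ^ 2 + 1)))

noncomputable def nval (p m : ℕ) (ε : ℤ) (j : ℕ) : ℂ :=
  if j % 2 = 0 then (ε : ℂ) * ((Real.sqrt ((p : ℝ) ^ (m + j)) : ℝ) : ℂ)
  else (ε : ℂ) * Complex.I * ((Real.sqrt ((p : ℝ) ^ (m + j)) : ℝ) : ℂ)

noncomputable def nn (p m : ℕ) [Fact p.Prime] (ε : ℤ) (j : ℕ) : ℕ :=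
  {t : GaloisField p m × GaloisField p m × GaloisField p m |
    t ≠ (0, 0, 0) ∧ expSum p m t.1 t.2.1 t.2.2 = nval p m ε j}.ncard

/-! Orthogonality turns the moments of the sums `∑ x, ψ (α x² + β x⁴ + γ x¹⁰)` into numbers of
tuples with `∑ xⱼ² = ∑ xⱼ⁴ = ∑ xⱼ¹⁰ = 0`, that is, into conditions on the power sums of degree `1`,
`2` and `5` of the squares `yⱼ = xⱼ²`. Splitting off `x = 0`, it suffices to count tuples of nonzero
elements. As `2` and `5` are invertible, Newton's identities turn the conditions into the vanishing
of the elementary symmetric polynomials `e₁`, `e₂`, `e₅` of the `yⱼ`. Hence there are no such `1`-,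
`2`- or `5`-tuples, and the condition of degree `10` is redundant for fewer than five variables. In
characteristic three, `∏ (T - yⱼ) = T³ - e₃` is a cube for three variables, so that the `yⱼ` agree,
and for four variables the product `(x₂² - (x₀ + x₁)²) (x₂² - (x₀ - x₁)²)` of Heron's formula
vanishes, so that `x₂²` and `x₃²` are `(x₀ ± x₁)²` in some order. -/

section Moments

open AddChar

lemma addChar_sum_eq_prod {A M ι : Type*} [AddCommMonoid A] [CommMonoid M] (ψ : AddChar A M)
    (s : Finset ι) (f : ι → A) : ψ (∑ i ∈ s, f i) = ∏ i ∈ s, ψ (f i) :=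
  map_prod ψ.toMonoidHom _ s

lemma sum_fin_three_arrow {A M : Type*} [Fintype A] [AddCommMonoid M] (g : (Fin 3 → A) → M) :
    ∑ v, g v = ∑ t : A × A × A, g ![t.1, t.2.1, t.2.2] := by
  refine (Fintype.sum_bijective (fun t : A × A × A ↦ ![t.1, t.2.1, t.2.2]) ⟨?_, ?_⟩ _ _
    fun _ ↦ rfl).symm
  · rintro ⟨a, b, c⟩ ⟨a', b', c'⟩ h
    simpa using h
  · intro v
    exact ⟨(v 0, v 1, v 2), by ext i; fin_cases i <;> rfl⟩

variable {R : Type*} [CommRing R] [IsDomain R] {κ : Type*} [Fintype κ] [DecidableEq κ]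

lemma sum_addChar_dotProduct {A : Type*} [CommRing A] [Fintype A] [DecidableEq A] {ψ : AddChar A R}
    (hψ : ψ.IsPrimitive) (v : κ → A) :
    ∑ t : κ → A, ψ (t ⬝ᵥ v) = if v = 0 then (Fintype.card A : R) ^ Fintype.card κ else 0 := by
  calc ∑ t : κ → A, ψ (t ⬝ᵥ v) = ∑ t : κ → A, ∏ l, ψ (t l * v l) := by
        simp_rw [dotProduct, addChar_sum_eq_prod]
    _ = ∏ l, ∑ s, ψ (s * v l) := (Fintype.prod_sum fun l s ↦ ψ (s * v l)).symm
    _ = ∏ l, if v l = 0 then (Fintype.card A : R) else 0 := by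
        simp_rw [sum_mulShift _ hψ, Nat.cast_ite, Nat.cast_zero]
    _ = _ := by simp [Finset.prod_ite_zero, funext_iff]

lemma sum_pow_sum_addChar_dotProduct {A ι : Type*} [CommRing A] [Fintype A] [DecidableEq A]
    [Fintype ι] {ψ : AddChar A R} (hψ : ψ.IsPrimitive) (f : ι → κ → A) (k : ℕ) :
    ∑ t : κ → A, (∑ i, ψ (t ⬝ᵥ f i)) ^ k =
      (Fintype.card A : R) ^ Fintype.card κ * #{x : Fin k → ι | ∑ j, f (x j) = 0} := by
  calc ∑ t : κ → A, (∑ i, ψ (t ⬝ᵥ f i)) ^ k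
      = ∑ x : Fin k → ι, ∑ t : κ → A, ψ (t ⬝ᵥ ∑ j, f (x j)) := by
        simp_rw [Fintype.sum_pow, dotProduct_sum, addChar_sum_eq_prod]
        exact Finset.sum_comm
    _ = _ := by
        simp_rw [sum_addChar_dotProduct hψ, ← Finset.sum_filter, Finset.sum_const, nsmul_eq_mul,
          mul_comm]

lemma sum_eq_apply_zero_add_sum_units {G₀ M : Type*} [GroupWithZero G₀] [Fintype G₀]
    [DecidableEq G₀] [AddCommMonoid M] (f : G₀ → M) : ∑ x, f x = f 0 + ∑ u : G₀ˣ, f u := by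
  rw [Fintype.sum_eq_add_sum_subtype_ne f 0]
  congr 1
  exact (Fintype.sum_equiv unitsEquivNeZero _ _ fun _ ↦ rfl).symm

lemma sum_pow_sum_addChar_dotProduct_of_map_zero {F : Type*} [Field F] [Fintype F] [DecidableEq F]
    {ψ : AddChar F R} (hψ : ψ.IsPrimitive) {f : F → κ → F} (hf : f 0 = 0) (n : ℕ) :
    ∑ t : κ → F, (∑ x, ψ (t ⬝ᵥ f x)) ^ n =
      (Fintype.card F : R) ^ Fintype.card κ *
        ∑ k ∈ range (n + 1), #{u : Fin k → Fˣ | ∑ j, f (u j) = 0} * (n.choose k : R) := by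
  simp_rw [sum_eq_apply_zero_add_sum_units (G₀ := F), hf, dotProduct_zero, map_zero_eq_one,
    add_comm (1 : R), add_pow, one_pow, mul_one]
  rw [Finset.sum_comm]
  simp_rw [← Finset.sum_mul, sum_pow_sum_addChar_dotProduct hψ (fun u : Fˣ ↦ f u),
    Finset.mul_sum, mul_assoc]

end Moments

section Newton

open MvPolynomial

variable {σ R : Type*} [Fintype σ] [CommRing R] {y : σ → R}

lemma eval_esymm_card (y : σ → R) : eval y (esymm σ R (Fintype.card σ)) = ∏ i, y i := by
  rw [esymm, ← Finset.card_univ, Finset.powersetCard_self]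
  simp

lemma eval_esymm_eq_zero_of_card_lt {n : ℕ} (hn : Fintype.card σ < n) :
    eval y (esymm σ R n) = 0 := by
  rw [esymm, Finset.powersetCard_eq_empty.2 hn, Finset.sum_empty, map_zero]

variable [NoZeroDivisors R]

lemma eval_esymm_two_eq_zero (h2 : (2 : R) ≠ 0) (hy₁ : ∑ i, y i = 0) (hy₂ : ∑ i, y i ^ 2 = 0) :
    eval y (esymm σ R 2) = 0 := by
  have hindex : {a ∈ antidiagonal 2 | a.1 < 2} = {(0, 2), (1, 1)} := by decide
  have newton := congrArg (eval y) (mul_esymm_eq_sum σ R 2)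
  rw [hindex] at newton
  simpa [psum, hy₁, hy₂, h2] using newton

lemma sum_pow_five_eq_five_mul_eval_esymm (h2 : (2 : R) ≠ 0) (hy₁ : ∑ i, y i = 0)
    (hy₂ : ∑ i, y i ^ 2 = 0) : ∑ i, y i ^ 5 = 5 * eval y (esymm σ R 5) := by
  have hindex : {a ∈ antidiagonal 5 | a.1 < 5} = {(0, 5), (1, 4), (2, 3), (3, 2), (4, 1)} := by
    decide
  have newton := congrArg (eval y) (mul_esymm_eq_sum σ R 5)
  rw [hindex] at newton
  simpa [psum, esymm_one, (by decide : Even 6).neg_one_pow, hy₁, hy₂,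
    eval_esymm_two_eq_zero h2 hy₁ hy₂, eq_comm] using newton

end Newton

section ZeroSums

/-- The curve whose dot product with the parameters `![α, β, γ]` is `α x² + β x⁴ + γ x¹⁰`, the
phase of the exponential sum for `p = 3`. -/
def evenPowers {M : Type*} [Monoid M] (x : M) : Fin 3 → M := ![x ^ 2, x ^ 4, x ^ 10]

lemma evenPowers_zero {M₀ : Type*} [MonoidWithZero M₀] : evenPowers (0 : M₀) = 0 := by
  ext i
  fin_cases i <;> simp [evenPowers]

variable {F : Type*} [Field F] [Fintype F] [DecidableEq F]

variable (F) in
/-- The `k`-tuples of nonzero elements with vanishing power sums of degree `2`, `4` and `10`,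
whose number is the `k`-th moment of the exponential sum over `Fˣ` up to the factor `|F|³`. -/
def evenPowersZeroSums (k : ℕ) : Finset (Fin k → Fˣ) := {x | ∑ j, evenPowers (x j : F) = 0}

lemma mem_evenPowersZeroSums {k : ℕ} {x : Fin k → Fˣ} :
    x ∈ evenPowersZeroSums F k ↔ ∑ j, (x j : F) ^ 2 = 0 ∧ ∑ j, ((x j : F) ^ 2) ^ 2 = 0 ∧
      ∑ j, ((x j : F) ^ 2) ^ 5 = 0 := by
  simp [evenPowersZeroSums, evenPowers, funext_iff, Fin.forall_fin_succ, ← pow_mul]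

lemma mem_evenPowersZeroSums_of_lt_five (h2 : (2 : F) ≠ 0) {k : ℕ} (hk : k < 5)
    {x : Fin k → Fˣ} : x ∈ evenPowersZeroSums F k ↔
      ∑ j, (x j : F) ^ 2 = 0 ∧ ∑ j, ((x j : F) ^ 2) ^ 2 = 0 := by
  rw [mem_evenPowersZeroSums]
  refine ⟨fun h ↦ ⟨h.1, h.2.1⟩, fun h ↦ ⟨h.1, h.2, ?_⟩⟩
  rw [sum_pow_five_eq_five_mul_eval_esymm h2 h.1 h.2,
    eval_esymm_eq_zero_of_card_lt (by simpa using hk), mul_zero]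

lemma card_evenPowersZeroSums_zero : #(evenPowersZeroSums F 0) = 1 := by
  simp [evenPowersZeroSums]

lemma card_evenPowersZeroSums_eq_zero (h2 : (2 : F) ≠ 0) (h5 : (5 : F) ≠ 0) {k : ℕ}
    (hk : k = 1 ∨ k = 2 ∨ k = 5) : #(evenPowersZeroSums F k) = 0 := by
  refine Finset.card_eq_zero.2 (Finset.eq_empty_of_forall_notMem fun x hx ↦ ?_)
  obtain ⟨h₁, h₂, h₅⟩ := mem_evenPowersZeroSums.1 hx
  suffices MvPolynomial.eval (fun j ↦ (x j : F) ^ 2) (MvPolynomial.esymm (Fin k) F k) = 0 by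
    have hprod : ∏ j, (x j : F) ^ 2 = 0 := by
      rw [← eval_esymm_card, Fintype.card_fin, this]
    simp [Finset.prod_eq_zero_iff] at hprod
  rcases hk with rfl | rfl | rfl
  · simp at h₁
  · exact eval_esymm_two_eq_zero h2 h₁ h₂
  · rw [sum_pow_five_eq_five_mul_eval_esymm h2 h₁ h₂] at h₅
    exact (mul_eq_zero.1 h₅).resolve_left h5

/-- The nonzero square roots of `z ^ 2`: both of `z` and `-z` for `z ≠ 0`, none for `z = 0`. They
are the choices for a coordinate of a zero sum whose square is known to be `z ^ 2`. -/
def unitSqrtsOfSq (z : F) : Finset Fˣ := {u | (u : F) ^ 2 = z ^ 2}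

lemma mem_unitSqrtsOfSq {z : F} {u : Fˣ} : u ∈ unitSqrtsOfSq z ↔ (u : F) ^ 2 = z ^ 2 := by
  simp [unitSqrtsOfSq]

lemma unitSqrtsOfSq_zero : unitSqrtsOfSq (0 : F) = ∅ := by
  simp [unitSqrtsOfSq]

lemma unitSqrtsOfSq_coe (z : Fˣ) : unitSqrtsOfSq (z : F) = {z, -z} := by
  ext u
  simp [mem_unitSqrtsOfSq, sq_eq_sq_iff_eq_or_eq_neg, Units.ext_iff]

lemma card_unitSqrtsOfSq (h2 : (2 : F) ≠ 0) {z : F} (hz : z ≠ 0) : #(unitSqrtsOfSq z) = 2 := by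
  lift z to Fˣ using hz.isUnit
  rw [unitSqrtsOfSq_coe, Finset.card_pair]
  intro h
  refine mul_ne_zero h2 z.ne_zero ?_
  linear_combination (congrArg Units.val h).trans (Units.val_neg z)

end ZeroSums

section CharThree

lemma sum_eq_zero_and_sum_sq_eq_zero_iff_of_three {R : Type*} [CommRing R] [IsReduced R]
    [CharP R 3] {a b c : R} :
    a + b + c = 0 ∧ a ^ 2 + b ^ 2 + c ^ 2 = 0 ↔ b = a ∧ c = a := by
  have h3 : (3 : R) = 0 := CharP.ofNat_eq_zero R 3
  constructor
  · rintro ⟨h₁, h₂⟩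
    have hba : (b - a) ^ 2 = 0 := by
      linear_combination 2 * h₂ - 2 * (c - a - b) * h₁ - (a ^ 2 + b ^ 2 + 2 * a * b) * h3
    obtain rfl : b = a := sub_eq_zero.1 (pow_eq_zero_iff two_ne_zero |>.1 hba)
    exact ⟨rfl, by linear_combination h₁ - b * h3⟩
  · rintro ⟨rfl, rfl⟩
    exact ⟨by linear_combination c * h3, by linear_combination c ^ 2 * h3⟩

lemma sum_sq_eq_zero_and_sum_pow_four_eq_zero_iff {R : Type*} [CommRing R] [NoZeroDivisors R]
    [CharP R 3] {a b c d : R} :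
    a ^ 2 + b ^ 2 + c ^ 2 + d ^ 2 = 0 ∧
        (a ^ 2) ^ 2 + (b ^ 2) ^ 2 + (c ^ 2) ^ 2 + (d ^ 2) ^ 2 = 0 ↔
      c ^ 2 = (a + b) ^ 2 ∧ d ^ 2 = (a - b) ^ 2 ∨ c ^ 2 = (a - b) ^ 2 ∧ d ^ 2 = (a + b) ^ 2 := by
  have h3 : (3 : R) = 0 := CharP.ofNat_eq_zero R 3
  constructor
  · rintro ⟨h₁, h₂⟩
    have heron : (c ^ 2 - (a + b) ^ 2) * (c ^ 2 - (a - b) ^ 2) = 0 := by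
      linear_combination 2 * h₂ - 2 * (d ^ 2 - (a ^ 2 + b ^ 2 + c ^ 2)) * h₁ -
        (a ^ 4 + b ^ 4 + c ^ 4 + 2 * (a ^ 2 * b ^ 2 + a ^ 2 * c ^ 2 + b ^ 2 * c ^ 2)) * h3
    refine (mul_eq_zero.1 heron).imp (fun h ↦ ⟨sub_eq_zero.1 h, ?_⟩)
      fun h ↦ ⟨sub_eq_zero.1 h, ?_⟩ <;>
    linear_combination h₁ - h - (a ^ 2 + b ^ 2) * h3
  · rintro (⟨hc, hd⟩ | ⟨hc, hd⟩) <;> rw [hc, hd] <;> constructor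
    · linear_combination (a ^ 2 + b ^ 2) * h3
    · linear_combination (a ^ 4 + b ^ 4 + 4 * a ^ 2 * b ^ 2) * h3
    · linear_combination (a ^ 2 + b ^ 2) * h3
    · linear_combination (a ^ 4 + b ^ 4 + 4 * a ^ 2 * b ^ 2) * h3

lemma two_ne_zero_of_charP_three {R : Type*} [AddMonoidWithOne R] [CharP R 3] : (2 : R) ≠ 0 := by
  exact_mod_cast mt (CharP.cast_eq_zero_iff R 3 2).1 (by norm_num)

lemma five_ne_zero_of_charP_three {R : Type*} [AddMonoidWithOne R] [CharP R 3] : (5 : R) ≠ 0 := by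
  exact_mod_cast mt (CharP.cast_eq_zero_iff R 3 5).1 (by norm_num)

variable {F : Type*} [Field F] [CharP F 3] [Fintype F] [DecidableEq F]

lemma evenPowersZeroSums_three_fiber (a : Fˣ) :
    {x ∈ evenPowersZeroSums F 3 | x 0 = a} =
      Fintype.piFinset ![{a}, unitSqrtsOfSq (a : F), unitSqrtsOfSq (a : F)] := by
  ext x
  rw [Finset.mem_filter,
    mem_evenPowersZeroSums_of_lt_five two_ne_zero_of_charP_three (by norm_num),
    Fin.sum_univ_three, Fin.sum_univ_three, sum_eq_zero_and_sum_sq_eq_zero_iff_of_three]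
  simp only [Fintype.mem_piFinset, Fin.forall_fin_succ, Matrix.cons_val_zero, Matrix.cons_val_succ,
    Fin.succ_zero_eq_one, Fin.succ_one_eq_two, Finset.mem_singleton, mem_unitSqrtsOfSq,
    IsEmpty.forall_iff, and_true]
  constructor
  · rintro ⟨h, rfl⟩
    exact ⟨rfl, h⟩
  · rintro ⟨rfl, h⟩
    exact ⟨h, rfl⟩

lemma card_evenPowersZeroSums_three :
    #(evenPowersZeroSums F 3) = (Fintype.card F - 1) * 4 := by
  have hfiber (a : Fˣ) : #{x ∈ evenPowersZeroSums F 3 | x 0 = a} = 4 := by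
    simp [evenPowersZeroSums_three_fiber, Fintype.card_piFinset, Fin.prod_univ_three,
      card_unitSqrtsOfSq two_ne_zero_of_charP_three a.ne_zero]
  rw [Finset.card_eq_sum_card_fiberwise fun x _ ↦ Finset.mem_univ (x 0)]
  simp only [hfiber, Finset.sum_const, Finset.card_univ, Fintype.card_units, smul_eq_mul]

lemma evenPowersZeroSums_four_fiber (a b : Fˣ) :
    {x ∈ evenPowersZeroSums F 4 | (x 0, x 1) = (a, b)} =
      Fintype.piFinset ![{a}, {b}, unitSqrtsOfSq (a + b : F), unitSqrtsOfSq (a - b : F)] ∪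
        Fintype.piFinset ![{a}, {b}, unitSqrtsOfSq (a - b : F), unitSqrtsOfSq (a + b : F)] := by
  ext x
  rw [Finset.mem_filter,
    mem_evenPowersZeroSums_of_lt_five two_ne_zero_of_charP_three (by norm_num),
    Fin.sum_univ_four, Fin.sum_univ_four, sum_sq_eq_zero_and_sum_pow_four_eq_zero_iff]
  simp only [Finset.mem_union, Fintype.mem_piFinset, Fin.forall_fin_succ, Matrix.cons_val_zero,
    Matrix.cons_val_succ, Fin.succ_zero_eq_one, Fin.succ_one_eq_two, Fin.reduceSucc,
    Finset.mem_singleton, mem_unitSqrtsOfSq, IsEmpty.forall_iff, and_true, Prod.mk.injEq]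
  constructor
  · rintro ⟨h, rfl, rfl⟩
    exact h.imp (fun h ↦ ⟨rfl, rfl, h⟩) fun h ↦ ⟨rfl, rfl, h⟩
  · rintro (⟨rfl, rfl, h⟩ | ⟨rfl, rfl, h⟩)
    · exact ⟨.inl h, rfl, rfl⟩
    · exact ⟨.inr h, rfl, rfl⟩

lemma card_evenPowersZeroSums_four_fiber (a b : Fˣ) :
    #{x ∈ evenPowersZeroSums F 4 | (x 0, x 1) = (a, b)} = if b = a ∨ b = -a then 0 else 8 := by
  have h2 : (2 : F) ≠ 0 := two_ne_zero_of_charP_three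
  have hdisj : Disjoint
      (Fintype.piFinset ![{a}, {b}, unitSqrtsOfSq (a + b : F), unitSqrtsOfSq (a - b : F)])
      (Fintype.piFinset ![{a}, {b}, unitSqrtsOfSq (a - b : F), unitSqrtsOfSq (a + b : F)]) := by
    refine Finset.disjoint_left.2 fun x hx hx' ↦ ?_
    have hadd := mem_unitSqrtsOfSq.1 (Fintype.mem_piFinset.1 hx 2)
    have hsub := mem_unitSqrtsOfSq.1 (Fintype.mem_piFinset.1 hx' 2)
    refine mul_ne_zero (mul_ne_zero (mul_ne_zero h2 h2) a.ne_zero) b.ne_zero ?_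
    linear_combination hsub - hadd
  rw [evenPowersZeroSums_four_fiber, Finset.card_union_of_disjoint hdisj]
  split_ifs with h
  · rcases h with rfl | rfl <;>
    simp [Fintype.card_piFinset, Fin.prod_univ_four, unitSqrtsOfSq_zero]
  · push Not at h
    have hadd : (a + b : F) ≠ 0 := fun hab ↦ h.2 (Units.ext (eq_neg_of_add_eq_zero_right hab))
    have hsub : (a - b : F) ≠ 0 := fun hab ↦ h.1 (Units.ext (sub_eq_zero.1 hab).symm)
    simp [Fintype.card_piFinset, Fin.prod_univ_four, card_unitSqrtsOfSq h2 hadd,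
      card_unitSqrtsOfSq h2 hsub]

lemma card_evenPowersZeroSums_four :
    #(evenPowersZeroSums F 4) = (Fintype.card F - 1) * ((Fintype.card F - 3) * 8) := by
  have hcompl (a : Fˣ) : #{b | ¬(b = a ∨ b = -a)} = Fintype.card F - 3 := by
    have hpair : ({b | b = a ∨ b = -a} : Finset Fˣ) = unitSqrtsOfSq (a : F) := by
      ext b
      simp [unitSqrtsOfSq_coe]
    rw [Finset.filter_not, Finset.card_univ_sdiff, hpair, Fintype.card_units,
      card_unitSqrtsOfSq two_ne_zero_of_charP_three a.ne_zero, Nat.sub_sub]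
  rw [Finset.card_eq_sum_card_fiberwise fun x _ ↦ Finset.mem_univ (x 0, x 1),
    Fintype.sum_prod_type]
  simp only [card_evenPowersZeroSums_four_fiber, Finset.sum_ite, Finset.sum_const_zero, zero_add,
    Finset.sum_const, hcompl, Finset.card_univ, Fintype.card_units, smul_eq_mul]

lemma sum_card_evenPowersZeroSums_mul_choose_five (R : Type*) [CommRing R] :
    ∑ k ∈ range 6, #(evenPowersZeroSums F k) * (Nat.choose 5 k : R) =
      5 * ((Fintype.card F : R) - 1) * (8 * Fintype.card F - 16) + 1 := by
  have hempty {k : ℕ} := card_evenPowersZeroSums_eq_zero (F := F) (k := k)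
    two_ne_zero_of_charP_three five_ne_zero_of_charP_three
  have hq : 3 ≤ Fintype.card F :=
    Nat.le_of_dvd Fintype.card_pos ((CharP.cast_eq_zero_iff F 3 _).1 (Nat.cast_card_eq_zero F))
  simp only [Finset.sum_range_succ, Finset.sum_range_zero, card_evenPowersZeroSums_zero,
    hempty (.inl rfl), hempty (.inr (.inl rfl)), card_evenPowersZeroSums_three,
    card_evenPowersZeroSums_four, hempty (.inr (.inr rfl))]
  push_cast [Nat.cast_sub (Nat.one_le_of_lt hq), Nat.cast_sub hq, Nat.choose]
  ring

end CharThree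

section TraceChar

variable (p : ℕ) [Fact p.Prime] (K : Type*) [Field K] [Algebra (ZMod p) K]

/-- The canonical additive character `z ↦ ζ_p ^ Tr z` of a finite extension of `𝔽_p`, with values
in `ℂ` and `ζ_p = exp (2πi / p)`. -/
noncomputable def traceChar : AddChar K ℂ :=
  ZMod.stdAddChar.compAddMonoidHom (Algebra.trace (ZMod p) K).toAddMonoidHom

variable {K} in
lemma traceChar_apply (z : K) : traceChar p K z = zetaPow p (Algebra.trace (ZMod p) K z) := by
  simp only [traceChar, AddChar.compAddMonoidHom_apply, zetaPow, ZMod.stdAddChar_apply,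
    ZMod.toCircle_apply]
  rfl

lemma traceChar_isPrimitive [Finite K] : (traceChar p K).IsPrimitive := by
  refine .of_ne_one fun h ↦ ?_
  obtain ⟨b, hb⟩ := Algebra.trace_surjective (ZMod p) K 1
  have hstd : ZMod.stdAddChar (1 : ZMod p) = ZMod.stdAddChar (0 : ZMod p) := by
    rw [← hb, AddChar.map_zero_eq_one]
    exact DFunLike.congr_fun h b
  exact one_ne_zero (ZMod.injective_stdAddChar hstd)

variable {p}

lemma expSum_eq_sum_traceChar {m : ℕ} [Fintype (GaloisField p m)] (α β γ : GaloisField p m) :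
    expSum p m α β γ = ∑ x, traceChar p (GaloisField p m)
      (α * x ^ 2 + β * x ^ (p + 1) + γ * x ^ (p ^ 2 + 1)) := by
  simp only [expSum, traceChar_apply]
  convert rfl

end TraceChar

theorem sum_S_fifth_moment_general {F R : Type*} [Field F] [Fintype F] [CharP F 3] [CommRing R]
    [IsDomain R] {ψ : AddChar F R} (hψ : ψ.IsPrimitive) :
    ∑ t : F × F × F, (∑ x, ψ (t.1 * x ^ 2 + t.2.1 * x ^ 4 + t.2.2 * x ^ 10)) ^ 5 =
      (5 * ((Fintype.card F : R) - 1) * (8 * Fintype.card F - 16) + 1) * Fintype.card F ^ 3 := by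
  classical
  calc ∑ t : F × F × F, (∑ x, ψ (t.1 * x ^ 2 + t.2.1 * x ^ 4 + t.2.2 * x ^ 10)) ^ 5
      = ∑ t : Fin 3 → F, (∑ x, ψ (t ⬝ᵥ evenPowers x)) ^ 5 := by
        simp only [sum_fin_three_arrow, evenPowers, Matrix.vec3_dotProduct']
    _ = Fintype.card F ^ 3 * ∑ k ∈ range 6, #(evenPowersZeroSums F k) * (Nat.choose 5 k : R) :=
        sum_pow_sum_addChar_dotProduct_of_map_zero hψ evenPowers_zero 5
    _ = _ := by rw [sum_card_evenPowersZeroSums_mul_choose_five, mul_comm]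

theorem sum_S_fifth_moment (m : ℕ) (hm : 0 < m) :
    letI : Fact (Nat.Prime 3) := ⟨by norm_num⟩
    letI : Fintype (GaloisField 3 m) := Fintype.ofFinite _
    ∑ t : GaloisField 3 m × GaloisField 3 m × GaloisField 3 m,
      (expSum 3 m t.1 t.2.1 t.2.2) ^ 5 =
        (5 * ((3 : ℂ) ^ m - 1) * (8 * (3 : ℂ) ^ m - 2 * 3 - 10) + 1) * (3 : ℂ) ^ (3 * m) := by
  let : Fintype (GaloisField 3 m) := Fintype.ofFinite _
  simp_rw [expSum_eq_sum_traceChar]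
  refine (sum_S_fifth_moment_general (traceChar_isPrimitive 3 (GaloisField 3 m))).trans ?_
  rw [Fintype.card_eq_nat_card, GaloisField.card 3 m hm.ne', Nat.cast_pow, Nat.cast_ofNat]
  ring
end

section
/- Let p = 3, m a positive integer, and q = 3^m. Then the number of 4-tuples (x,y,z,w) ∈ F_q⁴ satisfying x²+y²+z²+w² = 0, x⁴+y⁴+z⁴+w⁴ = 0, and x^{10}+y^{10}+z^{10}+w^{10} = 0 equals 8(3^m − 1)² + 1. -/
/-!
In characteristic three the Frobenius identity gives
`(x + y) ^ n + (x - y) ^ n = 2 (x ^ n + y ^ n) = -(x ^ n + y ^ n)` for every exponent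
`n = 3 ^ k + 1`. In the variables `a = x + y`, `b = x - y`, each equation therefore becomes
`z ^ n + w ^ n = a ^ n + b ^ n`. The exponents `2` and `4` already force
`{z ^ 2, w ^ 2} = {a ^ 2, b ^ 2}` as multisets, and this in turn implies all the other equations
because the exponents are even. Inclusion–exclusion over the two matchings of `z ^ 2, w ^ 2`
with `a ^ 2, b ^ 2` then yields `2 (2q - 1) ^ 2 - (8 (q - 1) + 1) = 8 (q - 1) ^ 2 + 1` solutions.
-/

section PowerSums

variable {R : Type*} [CommRing R]

lemma add_pow_add_sub_pow_expChar_pow_succ (p k : ℕ) [ExpChar R p] (x y : R) :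
    (x + y) ^ (p ^ k + 1) + (x - y) ^ (p ^ k + 1) =
      2 * (x ^ (p ^ k + 1) + y ^ (p ^ k + 1)) := by
  rw [pow_succ, pow_succ, add_pow_expChar_pow, sub_pow_expChar_pow]
  ring

lemma sum_pow_three_pow_succ_eq_zero_iff [CharP R 3] (k : ℕ) (x y z w : R) :
    x ^ (3 ^ k + 1) + y ^ (3 ^ k + 1) + z ^ (3 ^ k + 1) + w ^ (3 ^ k + 1) = 0 ↔
      z ^ (3 ^ k + 1) + w ^ (3 ^ k + 1) = (x + y) ^ (3 ^ k + 1) + (x - y) ^ (3 ^ k + 1) := by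
  have : Fact (Nat.Prime 3) := ⟨Nat.prime_three⟩
  have h3 : (3 : R) = 0 := CharP.ofNat_eq_zero R 3
  have hneg : 2 * (x ^ (3 ^ k + 1) + y ^ (3 ^ k + 1)) =
      -(x ^ (3 ^ k + 1) + y ^ (3 ^ k + 1)) := by
    linear_combination (x ^ (3 ^ k + 1) + y ^ (3 ^ k + 1)) * h3
  rw [add_pow_add_sub_pow_expChar_pow_succ 3 k x y, hneg, add_assoc, ← eq_neg_iff_add_eq_zero,
    eq_comm, neg_eq_iff_eq_neg]

lemma sym2_mk_eq_iff_add_eq_and_sq_add_sq_eq [IsDomain R] [NeZero (2 : R)] {s t u v : R} :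
    s(s, t) = s(u, v) ↔ s + t = u + v ∧ s ^ 2 + t ^ 2 = u ^ 2 + v ^ 2 := by
  rw [Sym2.eq_iff]
  constructor
  · rintro (⟨rfl, rfl⟩ | ⟨rfl, rfl⟩)
    · exact ⟨rfl, rfl⟩
    · exact ⟨add_comm _ _, add_comm _ _⟩
  · rintro ⟨hsum, hsq⟩
    have hroot : (s - u) * (s - v) = 0 := by
      apply mul_left_cancel₀ (two_ne_zero (α := R))
      linear_combination (s - t - u - v) * hsum + hsq
    rcases mul_eq_zero.mp hroot with h | h
    · exact .inl ⟨sub_eq_zero.mp h, by linear_combination hsum - h⟩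
    · exact .inr ⟨sub_eq_zero.mp h, by linear_combination hsum - h⟩

lemma pow_add_pow_eq_of_sym2_sq_eq {A : Type*} [Semiring A] {n : ℕ} (hn : Even n) {a b c d : A}
    (h : s(c ^ 2, d ^ 2) = s(a ^ 2, b ^ 2)) : c ^ n + d ^ n = a ^ n + b ^ n := by
  obtain ⟨j, rfl⟩ := hn.two_dvd
  simp only [pow_mul]
  rcases Sym2.eq_iff.mp h with ⟨hc, hd⟩ | ⟨hc, hd⟩
  · rw [hc, hd]
  · rw [hc, hd, add_comm]

lemma neZero_two_of_charP_three {A : Type*} [NonAssocSemiring A] [Nontrivial A] [CharP A 3] :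
    NeZero (2 : A) :=
  ⟨Ring.two_ne_zero (by rw [ringChar.eq A 3]; norm_num)⟩

lemma forall_sum_pow_three_pow_succ_eq_zero_iff [IsDomain R] [CharP R 3] {S : Set ℕ}
    (hzero : 0 ∈ S) (hone : 1 ∈ S) (x y z w : R) :
    (∀ k ∈ S, x ^ (3 ^ k + 1) + y ^ (3 ^ k + 1) + z ^ (3 ^ k + 1) + w ^ (3 ^ k + 1) = 0) ↔
      s(z ^ 2, w ^ 2) = s((x + y) ^ 2, (x - y) ^ 2) := by
  have : NeZero (2 : R) := neZero_two_of_charP_three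
  simp only [sum_pow_three_pow_succ_eq_zero_iff]
  constructor
  · intro h
    refine sym2_mk_eq_iff_add_eq_and_sq_add_sq_eq.mpr ⟨h 0 hzero, ?_⟩
    simpa only [← pow_mul, pow_one] using h 1 hone
  · intro h k _
    have heven : Even (3 ^ k + 1) := (Odd.pow (by decide)).add_one
    exact pow_add_pow_eq_of_sym2_sq_eq heven h

end PowerSums

section Counting

open Finset

variable {α β : Type*} [Fintype α] [DecidableEq β] (f : α → β)

-- The matchings `(f c, f d) = (u, v)` and `(f c, f d) = (v, u)` exclude each other unless `u = v`.
lemma card_sym2_map_eq_add_card_fiber_sq (u v : β) :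
    #{p : α × α | s(f p.1, f p.2) = s(u, v)} + (if u = v then #{c | f c = u} ^ 2 else 0) =
      2 * (#{c | f c = u} * #{c | f c = v}) := by
  classical
  have hunion : #{p : α × α | s(f p.1, f p.2) = s(u, v)} =
      #(({c | f c = u} : Finset α) ×ˢ ({c | f c = v} : Finset α) ∪
        ({c | f c = v} : Finset α) ×ˢ ({c | f c = u} : Finset α)) := by
    congr 1
    ext
    simp
  rw [hunion]
  split_ifs with huv
  · rw [huv, union_self, card_product]
    ring
  · rw [card_union_of_disjoint, card_product, card_product]
    · ring
    · exact disjoint_product.mpr (.inl (disjoint_filter.mpr fun _ _ hu hv => huv (hu ▸ hv)))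

lemma ncard_sym2_map_eq_add_sum_card_fiber_pow_three :
    {(a, b, c, d) : α × α × α × α | s(f c, f d) = s(f a, f b)}.ncard +
      ∑ a, #{c | f c = f a} ^ 3 = 2 * (∑ a, #{c | f c = f a}) ^ 2 := by
  have hncard : {(a, b, c, d) : α × α × α × α | s(f c, f d) = s(f a, f b)}.ncard =
      ∑ a, ∑ b, #{p : α × α | s(f p.1, f p.2) = s(f a, f b)} := by
    classical
    simp only [Set.ncard_eq_toFinset_card', Set.toFinset_ofPred, card_filter,
      Fintype.sum_prod_type]
  have hcube (a : α) : #{c | f c = f a} ^ 3 =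
      ∑ b, if f a = f b then #{c | f c = f a} ^ 2 else 0 := by
    simp only [eq_comm (a := f a), ← sum_filter, sum_const, smul_eq_mul]
    ring
  rw [hncard, sq, sum_mul_sum]
  simp only [hcube, ← sum_add_distrib, card_sym2_map_eq_add_card_fiber_sq, mul_sum]

variable {R : Type*} [CommRing R] [IsDomain R] [NeZero (2 : R)]

lemma card_filter_sq_eq_sq_of_ne_zero [Fintype R] [DecidableEq R] {a : R} (ha : a ≠ 0) :
    #{c | c ^ 2 = a ^ 2} = 2 := by
  have hfiber : ({c | c ^ 2 = a ^ 2} : Finset R) = {a, -a} := by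
    ext
    simp [sq_eq_sq_iff_eq_or_eq_neg]
  rw [hfiber, card_pair]
  intro h
  exact mul_ne_zero two_ne_zero ha (by linear_combination h)

lemma sum_card_filter_sq_eq_sq_pow [Fintype R] [DecidableEq R] (k : ℕ) :
    ∑ a : R, #{c | c ^ 2 = a ^ 2} ^ k = (Nat.card R - 1) * 2 ^ k + 1 := by
  rw [← sum_erase_add _ _ (mem_univ (0 : R)),
    sum_congr rfl fun a ha => by rw [card_filter_sq_eq_sq_of_ne_zero (ne_of_mem_erase ha)]]
  simp [filter_eq']

lemma ncard_sym2_sq_eq_sym2_sq [Finite R] :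
    {(a, b, c, d) : R × R × R × R | s(c ^ 2, d ^ 2) = s(a ^ 2, b ^ 2)}.ncard =
      8 * (Nat.card R - 1) ^ 2 + 1 := by
  classical
  have := Fintype.ofFinite R
  have hcount := ncard_sym2_map_eq_add_sum_card_fiber_pow_three fun a : R => a ^ 2
  have hlinear := sum_card_filter_sq_eq_sq_pow (R := R) 1
  have hcubic := sum_card_filter_sq_eq_sq_pow (R := R) 3
  simp only [pow_one] at hlinear
  rw [hlinear, hcubic] at hcount
  linarith

end Counting

lemma eq_and_eq_of_add_eq_add_of_sub_eq_sub {R : Type*} [CommRing R] [IsDomain R]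
    [NeZero (2 : R)] {x y x' y' : R} (hadd : x + y = x' + y') (hsub : x - y = x' - y') :
    x = x' ∧ y = y' := by
  have hx : x = x' := mul_left_cancel₀ (two_ne_zero (α := R)) (by linear_combination hadd + hsub)
  exact ⟨hx, by linear_combination hadd - hx⟩

theorem count_four_tuples_general {F : Type*} [Field F] [Finite F] [CharP F 3] {S : Set ℕ}
    (hzero : 0 ∈ S) (hone : 1 ∈ S) :
    {(x, y, z, w) : F × F × F × F | ∀ k ∈ S,
        x ^ (3 ^ k + 1) + y ^ (3 ^ k + 1) + z ^ (3 ^ k + 1) + w ^ (3 ^ k + 1) = 0}.ncard =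
      8 * (Nat.card F - 1) ^ 2 + 1 := by
  have : NeZero (2 : F) := neZero_two_of_charP_three
  let e : F × F × F × F → F × F × F × F := fun (x, y, z, w) => (x + y, x - y, z, w)
  have he : e.Injective := by
    rintro ⟨x, y, z, w⟩ ⟨x', y', z', w'⟩ h
    obtain ⟨hadd, hsub, rfl, rfl⟩ : x + y = x' + y' ∧ x - y = x' - y' ∧ z = z' ∧ w = w' := by
      simpa only [e, Prod.mk.injEq] using h
    obtain ⟨rfl, rfl⟩ := eq_and_eq_of_add_eq_add_of_sub_eq_sub hadd hsub
    rfl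
  let T : Set (F × F × F × F) := {(a, b, c, d) | s(c ^ 2, d ^ 2) = s(a ^ 2, b ^ 2)}
  calc
    _ = (e ⁻¹' T).ncard := by
      congr 1
      ext ⟨x, y, z, w⟩
      exact forall_sum_pow_three_pow_succ_eq_zero_iff hzero hone x y z w
    _ = T.ncard := Set.ncard_preimage_of_injective_subset_range he
      fun t _ => Finite.surjective_of_injective he t
    _ = 8 * (Nat.card F - 1) ^ 2 + 1 := ncard_sym2_sq_eq_sym2_sq

theorem count_four_tuples (m : ℕ) (hm : 0 < m) :
    letI : Fact (Nat.Prime 3) := ⟨by norm_num⟩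
    {(x, y, z, w) : GaloisField 3 m × GaloisField 3 m × GaloisField 3 m × GaloisField 3 m |
        x ^ 2 + y ^ 2 + z ^ 2 + w ^ 2 = 0 ∧
        x ^ 4 + y ^ 4 + z ^ 4 + w ^ 4 = 0 ∧
        x ^ 10 + y ^ 10 + z ^ 10 + w ^ 10 = 0}.ncard = 8 * (3 ^ m - 1) ^ 2 + 1 := by
  simpa [GaloisField.card 3 m hm.ne'] using
    count_four_tuples_general (F := GaloisField 3 m) (S := {0, 1, 2}) (by simp) (by simp)
end

section
/- Let p = 3, m a positive integer, and q = 3^m. Then the number of 5-tuples (x,y,z,w,u) ∈ F_q⁵ satisfying x²+y²+z²+w²+u² = 0, x⁴+y⁴+z⁴+w⁴+u⁴ = 0, and x^{10}+y^{10}+z^{10}+w^{10}+u^{10} = 0 equals 5(3^m − 1)(8·3^m − 16) + 1. -/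
/-!
Let `K / k` be an extension of finite fields, `q = |k|` odd, `m = [K : k]`, and let `φ` be the
Frobenius `c ↦ c ^ q`. For `x ∈ K⁵` the three equations say that `x ⬝ φʲ x = 0` for `j = 0, 1, 2`,
so `x, φ x, φ² x` span a totally isotropic subspace. It has dimension at most two, hence one of the
three vectors lies in the span of the preceding ones, this span is `φ`-stable, and `x ⬝ φʲ x = 0`
for every `j`. By Galois descent this means that the `m` coordinate vectors of `x` in `k⁵` with
respect to a basis of `K / k` are isotropic and pairwise orthogonal.

Such `m`-tuples are counted by splitting off one vector at a time: with `U` the span of the vectors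
already chosen, the next one is an isotropic vector of `Uᗮ`. For a totally isotropic `U`, counting
the pairs `(y, u) ∈ V × U` with `y + u` isotropic expresses the number of these vectors through the
number of isotropic vectors of `V`. The latter is `q⁴` for `V = k⁵`: after isolating one coordinate,
multiplication by `a - i b`, with `a ^ 2 + b ^ 2` a nonsquare, shows that the remaining sum of four
squares takes square and nonsquare values equally often.
-/

open Module Finset

section TotallyIsotropic

theorem span_le_orthogonal_span {K V : Type*} [CommRing K] [AddCommGroup V] [Module K V]
    {B : LinearMap.BilinForm K V} (hB : B.IsRefl) {s t : Set V}
    (h : ∀ y ∈ t, ∀ x ∈ s, B y x = 0) :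
    Submodule.span K s ≤ B.orthogonal (Submodule.span K t) := by
  refine Submodule.span_le.2 fun x hx ↦ ?_
  have hle : Submodule.span K t ≤ B.orthogonal (K ∙ x) :=
    Submodule.span_le.2 fun y hy z hz ↦ by
      obtain ⟨c, rfl⟩ := Submodule.mem_span_singleton.1 hz
      simp [hB _ _ (h y hy x hx)]
  exact fun y hy ↦ hB _ _ (hle hy x (Submodule.mem_span_singleton_self x))

variable {K V : Type*} [Field K] [AddCommGroup V] [Module K V] [FiniteDimensional K V]
  {B : LinearMap.BilinForm K V} {U : Submodule K V}

theorem two_mul_finrank_le_of_le_orthogonal (hB : B.Nondegenerate) (hU : U ≤ B.orthogonal U) :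
    2 * finrank K U ≤ finrank K V := by
  have h := Submodule.finrank_mono hU
  have hV := U.finrank_le
  rw [B.finrank_orthogonal hB] at h
  lia

end TotallyIsotropic

section SemilinearOrbit

theorem exists_mem_span_image_Iio_of_finrank_lt {K V : Type*} [DivisionRing K] [AddCommGroup V]
    [Module K V] {v : ℕ → V} {s : ℕ} (h : finrank K (Submodule.span K (v '' Set.Iio s)) < s) :
    ∃ i < s, v i ∈ Submodule.span K (v '' Set.Iio i) := by
  by_contra! hv
  have hrange (i : ℕ) : Set.range (fun j : Fin i ↦ v j) = v '' Set.Iio i := by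
    ext y
    simp [Fin.exists_iff]
  have hli : ∀ i ≤ s, LinearIndependent K (fun j : Fin i ↦ v j) := fun i hi ↦ by
    induction i with
    | zero => exact linearIndependent_empty_type
    | succ i ih =>
      refine linearIndependent_finSucc'.2 ⟨ih (by lia), ?_⟩
      simpa [Fin.init_def, hrange] using hv i hi
  have hcard := finrank_span_eq_card (hli s le_rfl)
  rw [hrange, Fintype.card_fin] at hcard
  exact h.ne hcard

theorem iterate_mem_span_iterate_of_mem {K V : Type*} [Semiring K] [AddCommMonoid V]
    [Module K V] {σ : K →+* K} {T : V →ₛₗ[σ] V} {x : V} {i : ℕ}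
    (hi : T^[i] x ∈ Submodule.span K ((T^[·] x) '' Set.Iio i)) (j : ℕ) :
    T^[j] x ∈ Submodule.span K ((T^[·] x) '' Set.Iio i) := by
  set W := Submodule.span K ((T^[·] x) '' Set.Iio i) with hW
  have hmem : ∀ j ≤ i, T^[j] x ∈ W := fun j hj ↦ by
    obtain rfl | hj := hj.eq_or_lt
    · exact hi
    · exact Submodule.subset_span ⟨j, hj, rfl⟩
  have hstable : W ≤ W.comap T := by
    rw [hW, Submodule.span_le, ← hW]
    rintro _ ⟨j, hj, rfl⟩
    exact (Function.iterate_succ_apply' T j x ▸ hmem (j + 1) hj : T (T^[j] x) ∈ W)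
  induction j with
  | zero => exact hmem 0 i.zero_le
  | succ j ih => exact Function.iterate_succ_apply' T j x ▸ hstable ih

theorem bilin_iterate_iterate {K V : Type*} [CommSemiring K] [AddCommMonoid V] [Module K V]
    {σ : K →+* K} {T : V → V} (B : LinearMap.BilinForm K V)
    (hT : ∀ y z, B (T y) (T z) = σ (B y z)) (y z : V) (i : ℕ) :
    B (T^[i] y) (T^[i] z) = σ^[i] (B y z) := by
  induction i with
  | zero => rfl
  | succ i ih => simp only [Function.iterate_succ_apply', hT, ih]

theorem bilin_iterate_eq_zero {K V : Type*} [Field K] [AddCommGroup V] [Module K V]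
    [FiniteDimensional K V] {σ : K →+* K} {T : V →ₛₗ[σ] V} {B : LinearMap.BilinForm K V} {x : V}
    (hB : B.Nondegenerate) (hrefl : B.IsRefl) (hT : ∀ y z, B (T y) (T z) = σ (B y z)) {s : ℕ}
    (hs : finrank K V < 2 * s) (h : ∀ j < s, B x (T^[j] x) = 0) (j : ℕ) : B x (T^[j] x) = 0 := by
  have horth : ∀ i < s, ∀ j < s, B (T^[i] x) (T^[j] x) = 0 := fun i hi j hj ↦ by
    wlog hij : i ≤ j generalizing i j
    · rw [hrefl.eq_iff]
      exact this j hj i hi (le_of_not_ge hij)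
    obtain ⟨d, rfl⟩ := Nat.exists_eq_add_of_le hij
    rw [Function.iterate_add_apply, bilin_iterate_iterate B hT, h d (by lia), iterate_map_zero]
  set W : ℕ → Submodule K V := fun i ↦ Submodule.span K ((T^[·] x) '' Set.Iio i)
  have hW : W s ≤ B.orthogonal (W s) := by
    refine span_le_orthogonal_span hrefl ?_
    rintro _ ⟨i, hi, rfl⟩ _ ⟨j, hj, rfl⟩
    exact horth i hi j hj
  have hfin : finrank K (W s) < s := by
    have := two_mul_finrank_le_of_le_orthogonal hB hW
    lia
  obtain ⟨i, hi, hmem⟩ := exists_mem_span_image_Iio_of_finrank_lt hfin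
  have hle : W i ≤ W s := Submodule.span_mono (Set.image_mono (Set.Iio_subset_Iio hi.le))
  exact hW (hle (iterate_mem_span_iterate_of_mem hmem j)) x
    (Submodule.subset_span ⟨0, by grind, rfl⟩)

end SemilinearOrbit

section GaloisDescent

theorem dotProduct_map_eq_sum_coord {k K ι J : Type*} [CommRing k] [CommRing K] [Algebra k K]
    [Fintype ι] [Fintype J] (b : Basis J k K) (x : ι → K) (τ : K →ₗ[k] K) :
    x ⬝ᵥ (τ ∘ x) =
      ∑ j, ∑ j', ((b.coord j ∘ x) ⬝ᵥ (b.coord j' ∘ x)) • (b j * τ (b j')) := by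
  have hx (i : ι) : x i * τ (x i) =
      ∑ j, ∑ j', (b.coord j (x i) * b.coord j' (x i)) • (b j * τ (b j')) := by
    conv_lhs => rw [← b.sum_repr (x i)]
    simp only [map_sum, map_smul, Finset.sum_mul_sum, smul_mul_smul_comm, Basis.coord_apply]
  simp only [dotProduct, Function.comp_apply, Finset.sum_smul, hx]
  rw [Finset.sum_comm]
  exact Finset.sum_congr rfl fun j _ ↦ Finset.sum_comm

variable {k K ι J : Type*} [Field k] [Field K] [Algebra k K] [Fintype ι]
  [FiniteDimensional k K] [IsGalois k K]

theorem algebraMap_trace_dotProduct_trace (x : ι → K) (a b : K) :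
    algebraMap k K
        ((fun i ↦ Algebra.trace k K (x i * a)) ⬝ᵥ fun i ↦ Algebra.trace k K (x i * b)) =
      ∑ ρ : Gal(K/k), ∑ τ : Gal(K/k), ρ a * τ b * ((ρ ∘ x) ⬝ᵥ (τ ∘ x)) := by
  simp only [dotProduct, map_sum, map_mul, trace_eq_sum_automorphisms, Finset.sum_mul_sum,
    Function.comp_apply]
  rw [Finset.sum_comm]
  refine Finset.sum_congr rfl fun ρ _ ↦ ?_
  rw [Finset.sum_comm]
  refine Finset.sum_congr rfl fun τ _ ↦ ?_
  rw [Finset.mul_sum]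
  exact Finset.sum_congr rfl fun i _ ↦ by ring

theorem dotProduct_coord_eq_zero_iff [Finite J] (b : Basis J k K) (x : ι → K) :
    (∀ j j', (b.coord j ∘ x) ⬝ᵥ (b.coord j' ∘ x) = 0) ↔ ∀ τ : Gal(K/k), x ⬝ᵥ (τ ∘ x) = 0 := by
  classical
  have := Fintype.ofFinite J
  refine ⟨fun h τ ↦ ?_, fun h j j' ↦ ?_⟩
  · simpa [h] using dotProduct_map_eq_sum_coord b x τ.toLinearMap
  · have hcoord (j : J) : b.coord j ∘ x = fun i ↦ Algebra.trace k K (x i * b.traceDual j) := by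
      ext i
      conv_lhs => rw [← b.traceDual_traceDual]
      exact b.traceDual.traceDual_repr_apply (x i) j
    have hconj (ρ τ : Gal(K/k)) : (ρ ∘ x) ⬝ᵥ (τ ∘ x) = 0 := by
      have hτ : τ ∘ x = ρ ∘ ((ρ⁻¹ * τ) ∘ x) := by
        ext i
        simp [← AlgEquiv.mul_apply]
      rw [hτ]
      exact (RingHom.map_dotProduct (ρ : K →+* K) _ _).symm.trans (by simp [h])
    apply FaithfulSMul.algebraMap_injective k K
    rw [hcoord, hcoord, algebraMap_trace_dotProduct_trace]
    simp [hconj]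

end GaloisDescent

section IsotropicTuples

variable {k V : Type*} [CommRing k] [AddCommGroup V] [Module k V]

/-- The isotropic vectors of `B` in the orthogonal complement of `U`. -/
def isotropicVectors (B : LinearMap.BilinForm k V) (U : Submodule k V) : Set V :=
  {w | w ∈ B.orthogonal U ∧ B w w = 0}

/-- The `m`-tuples of vectors spanning, together with `U`, a totally isotropic subspace, provided
that `U` is itself totally isotropic. -/
def isotropicTuples (B : LinearMap.BilinForm k V) (U : Submodule k V) (m : ℕ) :
    Set (Fin m → V) :=
  {v | (∀ i, v i ∈ B.orthogonal U) ∧ ∀ i j, B (v i) (v j) = 0}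

variable {B : LinearMap.BilinForm k V} {U : Submodule k V}

theorem mem_orthogonal_sup_span_singleton {w y : V} :
    y ∈ B.orthogonal (U ⊔ k ∙ w) ↔ y ∈ B.orthogonal U ∧ B w y = 0 := by
  refine ⟨fun h ↦ ⟨B.orthogonal_le le_sup_left h, h w <|
    le_sup_right (a := U) (Submodule.mem_span_singleton_self w)⟩, fun ⟨hU, hw⟩ z hz ↦ ?_⟩
  obtain ⟨u, hu, _, hw', rfl⟩ := Submodule.mem_sup.1 hz
  obtain ⟨c, rfl⟩ := Submodule.mem_span_singleton.1 hw'
  have huy : B u y = 0 := hU u hu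
  simp [huy, hw]

theorem sup_span_singleton_le_orthogonal (hB : B.IsRefl) (hU : U ≤ B.orthogonal U) {w : V}
    (hw : w ∈ isotropicVectors B U) : U ⊔ k ∙ w ≤ B.orthogonal (U ⊔ k ∙ w) := by
  refine sup_le (fun u hu ↦ ?_) ((Submodule.span_singleton_le_iff_mem _ _).2 ?_)
  · exact mem_orthogonal_sup_span_singleton.2 ⟨hU hu, hB _ _ (hw.1 u hu)⟩
  · exact mem_orthogonal_sup_span_singleton.2 hw

theorem subset_isotropicVectors (hU : U ≤ B.orthogonal U) : (U : Set V) ⊆ isotropicVectors B U :=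
  fun u hu ↦ ⟨hU hu, hU hu u hu⟩

theorem cons_mem_isotropicTuples_iff (hB : B.IsRefl) {m : ℕ} {w : V} {v : Fin m → V} :
    (Fin.cons w v : Fin (m + 1) → V) ∈ isotropicTuples B U (m + 1) ↔
      w ∈ isotropicVectors B U ∧ v ∈ isotropicTuples B (U ⊔ k ∙ w) m := by
  simp only [isotropicTuples, isotropicVectors, Set.mem_ofPred_eq, Fin.forall_fin_succ,
    Fin.cons_zero, Fin.cons_succ, mem_orthogonal_sup_span_singleton, hB.eq_iff (y := w), forall_and]
  tauto

/-- Splitting off the first vector of a tuple. -/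
def isotropicTuplesSuccEquiv (hB : B.IsRefl) (m : ℕ) :
    isotropicTuples B U (m + 1) ≃
      Σ w : isotropicVectors B U, isotropicTuples B (U ⊔ k ∙ (w : V)) m where
  toFun v :=
    have h := (cons_mem_isotropicTuples_iff hB (w := v.1 0) (v := Fin.tail v.1)).1 <| by
      rw [Fin.cons_self_tail]
      exact v.2
    ⟨⟨v.1 0, h.1⟩, ⟨Fin.tail v.1, h.2⟩⟩
  invFun p := ⟨Fin.cons p.1 p.2, (cons_mem_isotropicTuples_iff hB).2 ⟨p.1.2, p.2.2⟩⟩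
  left_inv v := Subtype.ext (Fin.cons_self_tail v.1)
  right_inv _ := rfl

theorem ncard_isotropicTuples_zero : (isotropicTuples B U 0).ncard = 1 := by
  simp [isotropicTuples]

theorem ncard_isotropicTuples_succ [Finite V] (hB : B.IsRefl) (hU : U ≤ B.orthogonal U) (m N : ℕ)
    (hN : ∀ w ∈ isotropicVectors B U \ U, (isotropicTuples B (U ⊔ k ∙ w) m).ncard = N) :
    (isotropicTuples B U (m + 1)).ncard =
      Nat.card U * (isotropicTuples B U m).ncard + (isotropicVectors B U \ U).ncard * N := by
  classical
  have := Fintype.ofFinite V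
  have sup_span_eq (w : V) (hw : w ∈ U) : U ⊔ k ∙ w = U :=
    sup_eq_left.2 ((Submodule.span_singleton_le_iff_mem _ _).2 hw)
  calc (isotropicTuples B U (m + 1)).ncard
      = ∑ w : isotropicVectors B U, (isotropicTuples B (U ⊔ k ∙ (w : V)) m).ncard := by
        simp only [← Nat.card_coe_set_eq, Nat.card_congr (isotropicTuplesSuccEquiv hB m),
          Nat.card_sigma]
    _ = ∑ w ∈ (isotropicVectors B U).toFinset, (isotropicTuples B (U ⊔ k ∙ w) m).ncard := by
        rw [sum_subtype _ (fun _ ↦ Set.mem_toFinset)]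
    _ = Nat.card U * (isotropicTuples B U m).ncard + (isotropicVectors B U \ U).ncard * N := by
        rw [← sum_sdiff (Set.toFinset_subset_toFinset.2 (subset_isotropicVectors hU)),
          ← Set.toFinset_sdiff, add_comm]
        congr 1
        · rw [sum_const_nat fun w hw ↦ by rw [sup_span_eq w (Set.mem_toFinset.1 hw)],
            ← Set.ncard_eq_toFinset_card']
          rfl
        · rw [sum_const_nat fun w hw ↦ hN w (Set.mem_toFinset.1 hw), ← Set.ncard_eq_toFinset_card']

theorem bilin_add_self_eq_add_two_mul (hB : B.IsSymm) (hU : U ≤ B.orthogonal U) (y : V)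
    (u : U) : B (y + u) (y + u) = B y y + 2 * B y u := by
  have huu : B (u : V) u = 0 := hU u.2 u u.2
  have huy : B (u : V) y = B y u := hB.eq u y
  simp [huu, huy]
  ring

-- Both sides count the pairs `(y, u)` in `V × U` with `y + u` isotropic.
theorem sum_ncard_add_isotropic [Fintype V] :
    ∑ y, {u : U | B (y + u) (y + u) = 0}.ncard = Nat.card U * {w | B w w = 0}.ncard := by
  classical
  have hfiber (u : U) : {y | B (y + u) (y + u) = 0}.ncard = {w | B w w = 0}.ncard :=
    Set.ncard_preimage_of_injective_subset_range (s := {w | B w w = 0}) (f := (· + (u : V)))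
      (add_left_injective _) fun w _ ↦ ⟨w - u, sub_add_cancel w _⟩
  simp only [Set.ncard_eq_toFinset_card', Set.toFinset_ofPred] at hfiber ⊢
  refine (sum_card_bipartiteAbove_eq_sum_card_bipartiteBelow (s := univ)
    (t := univ) fun y (u : U) ↦ B (y + u) (y + u) = 0).trans ?_
  simp only [bipartiteBelow, hfiber, sum_const, card_univ, smul_eq_mul, Nat.card_eq_fintype_card]

end IsotropicTuples

section IsotropicVectorCount

theorem natCard_mul_ncard_fiber {G H : Type*} [AddGroup G] [AddGroup H] [Finite G] {f : G →+ H}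
    (hf : Function.Surjective f) (a : H) : Nat.card H * {g | f g = a}.ncard = Nat.card G := by
  classical
  have := Fintype.ofFinite G
  have := Fintype.ofSurjective f hf
  simp only [Nat.card_eq_fintype_card, Set.ncard_eq_toFinset_card', Set.toFinset_ofPred]
  rw [← card_univ (α := G), card_eq_sum_card_fiberwise (s := univ) (t := univ) (f := f)
      fun _ _ ↦ mem_coe.2 (mem_univ _),
    sum_const_nat fun b _ ↦ AddMonoidHom.card_fiber_eq_of_mem_range f (hf b) (hf a), card_univ]

variable {k V : Type*} [Field k] [AddCommGroup V] [Module k V] [Finite V]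
  {B : LinearMap.BilinForm k V} {U : Submodule k V}

theorem natCard_mul_ncard_add_isotropic_of_notMem_orthogonal (h2 : (2 : k) ≠ 0) (hB : B.IsSymm)
    (hU : U ≤ B.orthogonal U) {y : V} (hy : y ∉ B.orthogonal U) :
    Nat.card k * {u : U | B (y + u) (y + u) = 0}.ncard = Nat.card U := by
  have hf : (2 : k) • (B y ∘ₗ U.subtype) ≠ 0 := fun h ↦ hy fun u hu ↦ by
    have hyu : 2 * B y u = 0 := LinearMap.congr_fun h ⟨u, hu⟩
    exact hB.isRefl _ _ ((mul_eq_zero.1 hyu).resolve_left h2)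
  simp only [bilin_add_self_eq_add_two_mul hB hU, add_comm (B y y), add_eq_zero_iff_eq_neg]
  exact natCard_mul_ncard_fiber (f := ((2 : k) • (B y ∘ₗ U.subtype)).toAddMonoidHom)
    (LinearMap.surjective hf) _

theorem natCard_mul_ncard_add_isotropic [DecidablePred (· ∈ B.orthogonal U)]
    [DecidablePred (· ∈ isotropicVectors B U)] (h2 : (2 : k) ≠ 0) (hB : B.IsSymm)
    (hU : U ≤ B.orthogonal U) (y : V) :
    Nat.card k * {u : U | B (y + u) (y + u) = 0}.ncard +
        (if y ∈ B.orthogonal U then Nat.card U else 0) =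
      (if y ∈ isotropicVectors B U then Nat.card k * Nat.card U else 0) + Nat.card U := by
  by_cases hy : y ∈ B.orthogonal U
  · have hyu (u : U) : B (y + u) (y + u) = B y y := by
      have huy : B y u = 0 := hB.isRefl _ _ (hy u u.2)
      rw [bilin_add_self_eq_add_two_mul hB hU]
      simp [huy]
    by_cases hyy : B y y = 0 <;> simp only [hyu] <;> simp [isotropicVectors, hy, hyy]
  · rw [natCard_mul_ncard_add_isotropic_of_notMem_orthogonal h2 hB hU hy]
    simp [isotropicVectors, hy]

theorem natCard_mul_ncard_isotropic_add_natCard_orthogonal (h2 : (2 : k) ≠ 0) (hB : B.IsSymm)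
    (hU : U ≤ B.orthogonal U) :
    Nat.card k * {w | B w w = 0}.ncard + Nat.card (B.orthogonal U) =
      Nat.card k * (isotropicVectors B U).ncard + Nat.card V := by
  classical
  have := Fintype.ofFinite V
  have h := sum_congr rfl fun y (_ : y ∈ univ) ↦ natCard_mul_ncard_add_isotropic h2 hB hU y
  simp only [sum_add_distrib, ← mul_sum, sum_ncard_add_isotropic, ← sum_filter, sum_const,
    smul_eq_mul, card_univ] at h
  have hV : #{y | y ∈ B.orthogonal U} = Nat.card (B.orthogonal U) :=
    (Nat.subtype_card _ fun _ ↦ mem_filter_univ _).symm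
  have hX : #{y | y ∈ isotropicVectors B U} = (isotropicVectors B U).ncard :=
    (Nat.subtype_card _ fun _ ↦ mem_filter_univ _).symm
  rw [hV, hX, ← Nat.card_eq_fintype_card] at h
  exact Nat.eq_of_mul_eq_mul_left (Nat.card_pos (α := U)) (by linarith)

theorem ncard_isotropicVectors_sdiff_add [Finite k] {h : ℕ} (h2 : (2 : k) ≠ 0)
    (hnd : B.Nondegenerate) (hB : B.IsSymm) (hV : finrank k V = 2 * h + 1)
    (hiso : Nat.card k * {w | B w w = 0}.ncard = Nat.card V)
    (hU : U ≤ B.orthogonal U) :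
    (isotropicVectors B U \ U).ncard + Nat.card k ^ finrank k U =
      Nat.card k ^ (2 * h - finrank k U) := by
  have hd := two_mul_finrank_le_of_le_orthogonal hnd hU
  have hX : Nat.card k * (isotropicVectors B U).ncard =
      Nat.card k * Nat.card k ^ (2 * h - finrank k U) := by
    have := natCard_mul_ncard_isotropic_add_natCard_orthogonal h2 hB hU
    rw [← pow_succ', show 2 * h - finrank k U + 1 = finrank k V - finrank k U by lia,
      ← B.finrank_orthogonal hnd, ← Module.natCard_eq_pow_finrank]
    lia
  rw [← Nat.eq_of_mul_eq_mul_left Nat.card_pos hX, ← Module.natCard_eq_pow_finrank]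
  exact Set.ncard_sdiff_add_ncard_of_subset (subset_isotropicVectors hU)

end IsotropicVectorCount

section RankTwo

variable {k V : Type*} [Field k] [AddCommGroup V] [Module k V] [Finite V]
  {B : LinearMap.BilinForm k V} {U : Submodule k V}

-- The hypothesis `hX` of this section holds for quadrics in dimension five, where it is
-- `ncard_isotropicVectors_sdiff_add`, and for alternating forms in dimension four.
theorem ncard_isotropicTuples_of_finrank_eq_two (hB : B.IsRefl)
    (hX : ∀ U ≤ B.orthogonal U, (isotropicVectors B U \ U).ncard + Nat.card k ^ finrank k U =
      Nat.card k ^ (4 - finrank k U))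
    (hU : U ≤ B.orthogonal U) (hd : finrank k U = 2) (m : ℕ) :
    (isotropicTuples B U m).ncard = Nat.card k ^ (2 * m) := by
  have hempty : isotropicVectors B U \ U = ∅ :=
    (Set.ncard_eq_zero).1 (by simpa [hd] using hX U hU)
  induction m with
  | zero => rw [ncard_isotropicTuples_zero, mul_zero, pow_zero]
  | succ m ih =>
    rw [ncard_isotropicTuples_succ hB hU m 0 (by simp [hempty]), ih, hempty,
      Module.natCard_eq_pow_finrank (K := k) (V := U), hd, Set.ncard_empty]
    ring

theorem ncard_isotropicTuples_of_finrank_eq_one (hB : B.IsRefl)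
    (hX : ∀ U ≤ B.orthogonal U, (isotropicVectors B U \ U).ncard + Nat.card k ^ finrank k U =
      Nat.card k ^ (4 - finrank k U))
    (hU : U ≤ B.orthogonal U) (hd : finrank k U = 1) (m : ℕ) :
    (isotropicTuples B U m).ncard + Nat.card k ^ (m + 1) =
      (Nat.card k + 1) * Nat.card k ^ (2 * m) := by
  have hN (m : ℕ) : ∀ w ∈ isotropicVectors B U \ U,
      (isotropicTuples B (U ⊔ k ∙ w) m).ncard = Nat.card k ^ (2 * m) := fun w hw ↦
    ncard_isotropicTuples_of_finrank_eq_two hB hX (sup_span_singleton_le_orthogonal hB hU hw.1)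
      (by rw [Submodule.finrank_sup_span_singleton hw.2, hd]) m
  have hXU := hX U hU
  induction m with
  | zero => rw [ncard_isotropicTuples_zero]; ring
  | succ m ih =>
    rw [ncard_isotropicTuples_succ hB hU m _ (hN m),
      Module.natCard_eq_pow_finrank (K := k) (V := U)]
    simp only [hd] at *
    zify at *
    linear_combination (Nat.card k : ℤ) * ih + (Nat.card k : ℤ) ^ (2 * m) * hXU

theorem ncard_isotropicTuples_bot [Finite k] (hB : B.IsRefl)
    (hX : ∀ U ≤ B.orthogonal U, (isotropicVectors B U \ U).ncard + Nat.card k ^ finrank k U =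
      Nat.card k ^ (4 - finrank k U)) (m : ℕ) :
    ((isotropicTuples B ⊥ m).ncard : ℤ) =
      (Nat.card k + 1) * (Nat.card k ^ 2 + 1) * (Nat.card k ^ m - 1) *
        (Nat.card k ^ m + 1 - Nat.card k) + 1 := by
  have hN (m : ℕ) : ∀ w ∈ isotropicVectors B ⊥ \ (⊥ : Submodule k V),
      (isotropicTuples B (⊥ ⊔ k ∙ w) m).ncard =
        (Nat.card k + 1) * Nat.card k ^ (2 * m) - Nat.card k ^ (m + 1) := fun w hw ↦ by
    rw [← ncard_isotropicTuples_of_finrank_eq_one hB hX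
      (sup_span_singleton_le_orthogonal hB bot_le hw.1)
      (by rw [Submodule.finrank_sup_span_singleton hw.2, finrank_bot]) m, Nat.add_sub_cancel]
  have hle (m : ℕ) : Nat.card k ^ (m + 1) ≤ (Nat.card k + 1) * Nat.card k ^ (2 * m) := by
    rw [pow_succ']
    exact Nat.mul_le_mul (Nat.le_succ _) (Nat.pow_le_pow_right Nat.card_pos (by lia))
  have hXbot := hX ⊥ bot_le
  simp only [finrank_bot, pow_zero, Nat.sub_zero] at hXbot
  zify at hXbot
  induction m with
  | zero => simp [ncard_isotropicTuples_zero]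
  | succ m ih =>
    rw [ncard_isotropicTuples_succ hB bot_le m _ (hN m), Nat.card_unique]
    push_cast [hle m]
    linear_combination ih +
      (((Nat.card k : ℤ) + 1) * Nat.card k ^ (2 * m) - Nat.card k ^ (m + 1)) * hXbot

end RankTwo

section OddSquares

theorem exists_sq_add_sq_eq {F : Type*} [Field F] [Finite F] (hF : ringChar F ≠ 2) (c : F) :
    ∃ a b : F, a ^ 2 + b ^ 2 = c := by
  have := Fintype.ofFinite F
  obtain ⟨a, b, hab⟩ := FiniteField.exists_root_sum_quadratic
    (f := (Polynomial.X ^ 2 : Polynomial F)) (g := Polynomial.X ^ 2 - Polynomial.C c) (by simp)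
    (Polynomial.degree_X_pow_sub_C two_pos c) (FiniteField.odd_card_of_char_ne_two hF)
  exact ⟨a, b, by simpa [add_sub, sub_eq_zero] using hab⟩

/-- Multiplication by `a - i b` on pairs of vectors, read as vectors `y + i z` with `i ^ 2 = -1`. -/
def mulConjEquiv {F V : Type*} [Field F] [AddCommGroup V] [Module F V] (a b : F)
    (h : a ^ 2 + b ^ 2 ≠ 0) : V × V ≃ V × V where
  toFun p := (a • p.1 + b • p.2, a • p.2 - b • p.1)
  invFun p := ((a ^ 2 + b ^ 2)⁻¹ • (a • p.1 - b • p.2), (a ^ 2 + b ^ 2)⁻¹ • (a • p.2 + b • p.1))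
  left_inv p := by
    ext1 <;> rw [inv_smul_eq_iff₀ h] <;> module
  right_inv p := by
    ext1 <;> simp only [smul_comm a, smul_comm b, ← smul_add, ← smul_sub] <;>
      rw [inv_smul_eq_iff₀ h] <;> module

theorem dotProduct_self_mulConjEquiv {F J : Type*} [Field F] [Fintype J] (a b : F)
    (h : a ^ 2 + b ^ 2 ≠ 0) (p : (J → F) × (J → F)) :
    (mulConjEquiv a b h p).1 ⬝ᵥ (mulConjEquiv a b h p).1 +
        (mulConjEquiv a b h p).2 ⬝ᵥ (mulConjEquiv a b h p).2 =
      (a ^ 2 + b ^ 2) * (p.1 ⬝ᵥ p.1 + p.2 ⬝ᵥ p.2) := by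
  simp only [mulConjEquiv, Equiv.coe_fn_mk, dotProduct_add, add_dotProduct, dotProduct_sub,
    sub_dotProduct, dotProduct_smul, smul_dotProduct, smul_eq_mul, dotProduct_comm p.2 p.1]
  ring

variable {F J : Type*} [Field F] [Fintype F] [DecidableEq F] [Fintype J] [DecidableEq J]

theorem sum_quadraticChar_mul_dotProduct_self_add (hF : ringChar F ≠ 2) (d : F) :
    ∑ p : (J → F) × (J → F), quadraticChar F (d * (p.1 ⬝ᵥ p.1 + p.2 ⬝ᵥ p.2)) = 0 := by
  obtain ⟨c, hc⟩ := FiniteField.exists_nonsquare hF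
  obtain ⟨a, b, rfl⟩ := exists_sq_add_sq_eq hF c
  have h0 : a ^ 2 + b ^ 2 ≠ 0 := fun h ↦ hc (h ▸ IsSquare.zero)
  have hneg := Equiv.sum_comp (mulConjEquiv (V := J → F) a b h0) fun p ↦
    quadraticChar F (d * (p.1 ⬝ᵥ p.1 + p.2 ⬝ᵥ p.2))
  simp only [dotProduct_self_mulConjEquiv, mul_left_comm d (a ^ 2 + b ^ 2),
    map_mul (quadraticChar F) (a ^ 2 + b ^ 2), quadraticChar_neg_one_iff_not_isSquare.2 hc,
    ← mul_sum] at hneg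
  linarith

theorem card_sq_add_dotProduct_self_eq_zero (hF : ringChar F ≠ 2) :
    #{p : F × (J → F) × (J → F) | p.1 ^ 2 + (p.2.1 ⬝ᵥ p.2.1 + p.2.2 ⬝ᵥ p.2.2) = 0} =
      Fintype.card F ^ (2 * Fintype.card J) := by
  have hsqrt (c : F) : (#{t : F | t ^ 2 + c = 0} : ℤ) = quadraticChar F (-1 * c) + 1 := by
    rw [← quadraticChar_card_sqrts hF]
    simp [add_eq_zero_iff_eq_neg]
  zify
  rw [card_filter, Fintype.sum_prod_type_right]
  simp only [← card_filter, Nat.cast_sum, hsqrt, sum_add_distrib,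
    sum_quadraticChar_mul_dotProduct_self_add hF]
  simp [two_mul, pow_add]

theorem ncard_dotProduct_self_eq_zero {k ι : Type*} [Field k] [Finite k] [Fintype ι] {h : ℕ}
    (hk : ringChar k ≠ 2) (hι : Fintype.card ι = 2 * h + 1) :
    {x : ι → k | x ⬝ᵥ x = 0}.ncard = Nat.card k ^ (2 * h) := by
  classical
  have := Fintype.ofFinite k
  let e : Unit ⊕ (Fin h ⊕ Fin h) ≃ ι := Fintype.equivOfCardEq (by simp; lia)
  let E : (ι → k) ≃ k × (Fin h → k) × (Fin h → k) :=
    (e.arrowCongr (Equiv.refl k)).symm.trans <| (Equiv.sumArrowEquivProdArrow _ _ _).trans <|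
      (Equiv.funUnique Unit k).prodCongr (Equiv.sumArrowEquivProdArrow _ _ _)
  have hE (x : ι → k) : x ⬝ᵥ x =
      (E x).1 ^ 2 + ((E x).2.1 ⬝ᵥ (E x).2.1 + (E x).2.2 ⬝ᵥ (E x).2.2) := by
    simp [dotProduct, ← Equiv.sum_comp e, E, pow_two]
  calc {x : ι → k | x ⬝ᵥ x = 0}.ncard
      = {p : k × (Fin h → k) × (Fin h → k) |
          p.1 ^ 2 + (p.2.1 ⬝ᵥ p.2.1 + p.2.2 ⬝ᵥ p.2.2) = 0}.ncard :=
        Set.ncard_congr' <| E.subtypeEquiv fun x ↦ by simp [hE]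
    _ = Nat.card k ^ (2 * h) := by
        rw [Set.ncard_eq_toFinset_card', Set.toFinset_ofPred,
          card_sq_add_dotProduct_self_eq_zero hk, Nat.card_eq_fintype_card, Fintype.card_fin]

end OddSquares

section FiniteField

/-- Coordinatewise application of a field endomorphism, as a semilinear map. -/
def compSemilinear {K : Type*} [Semiring K] (σ : K →+* K) (ι : Type*) : (ι → K) →ₛₗ[σ] (ι → K) where
  toFun x := σ ∘ x
  map_add' x y := by ext; simp
  map_smul' c x := by ext; simp

theorem iterate_compSemilinear {K ι : Type*} [Semiring K] (σ : K →+* K) (x : ι → K) (j : ℕ) :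
    (compSemilinear σ ι)^[j] x = σ^[j] ∘ x := by
  induction j with
  | zero => rfl
  | succ j ih => rw [Function.iterate_succ_apply', ih, Function.iterate_succ']; rfl

theorem nondegenerate_dotProductBilin (K ι : Type*) [CommSemiring K] [Fintype ι] :
    LinearMap.BilinForm.Nondegenerate (dotProductBilin K K : LinearMap.BilinForm K (ι → K)) :=
  ⟨dotProduct_eq_zero, fun y h ↦ dotProduct_eq_zero y fun x ↦ (dotProduct_comm y x).trans (h x)⟩

theorem isSymm_dotProductBilin (K ι : Type*) [CommSemiring K] [Fintype ι] :
    LinearMap.BilinForm.IsSymm (dotProductBilin K K : LinearMap.BilinForm K (ι → K)) :=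
  ⟨dotProduct_comm⟩

theorem dotProduct_iterate_comp_eq_zero {K ι : Type*} [Field K] [Fintype ι] {s : ℕ} (σ : K →+* K)
    {x : ι → K} (hs : Fintype.card ι < 2 * s) (h : ∀ j < s, x ⬝ᵥ (σ^[j] ∘ x) = 0) (j : ℕ) :
    x ⬝ᵥ (σ^[j] ∘ x) = 0 := by
  simp only [← iterate_compSemilinear] at h ⊢
  exact bilin_iterate_eq_zero (nondegenerate_dotProductBilin K ι)
    (isSymm_dotProductBilin K ι).isRefl (fun y z ↦ (RingHom.map_dotProduct σ y z).symm)
    (by simpa using hs) h j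

variable {k K ι : Type*} [Field k] [Finite k] [Field K] [Finite K] [Algebra k K] [Fintype ι]

theorem forall_sum_pow_eq_zero_iff {s : ℕ} (hs : Fintype.card ι < 2 * s) {x : ι → K} :
    (∀ j < s, ∑ i, x i ^ (Nat.card k ^ j + 1) = 0) ↔ ∀ τ : Gal(K/k), x ⬝ᵥ (τ ∘ x) = 0 := by
  have := Fintype.ofFinite k
  let φ := FiniteField.frobeniusAlgEquivOfAlgebraic k K
  have hφ (j : ℕ) : x ⬝ᵥ (φ^[j] ∘ x) = ∑ i, x i ^ (Nat.card k ^ j + 1) := by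
    rw [FiniteField.coe_frobeniusAlgEquivOfAlgebraic_iterate, Nat.card_eq_fintype_card]
    exact sum_congr rfl fun i _ ↦ (pow_succ' _ _).symm
  simp only [← hφ]
  refine ⟨fun h τ ↦ ?_, fun h j _ ↦ by simpa using h (φ ^ j)⟩
  obtain ⟨j, rfl⟩ := (FiniteField.bijective_frobeniusAlgEquivOfAlgebraic_pow k K).2 τ
  simpa using dotProduct_iterate_comp_eq_zero (φ : K →+* K) hs h j

theorem ncard_forall_sum_pow_eq_zero {s : ℕ} (hs : Fintype.card ι < 2 * s) :
    {x : ι → K | ∀ j < s, ∑ i, x i ^ (Nat.card k ^ j + 1) = 0}.ncard =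
      (isotropicTuples (dotProductBilin k k : LinearMap.BilinForm k (ι → k)) ⊥
        (finrank k K)).ncard := by
  let b := finBasis k K
  let e : (ι → K) ≃ (Fin (finrank k K) → ι → k) :=
    (Equiv.piCongrRight fun _ ↦ b.equivFun.toEquiv).trans (Equiv.piComm _)
  have he (x : ι → K) (j) : e x j = b.coord j ∘ x := rfl
  refine Set.ncard_congr' <| e.subtypeEquiv fun x ↦ ?_
  have h := (forall_sum_pow_eq_zero_iff hs).trans (dotProduct_coord_eq_zero_iff b x).symm
  simpa [isotropicTuples, he] using h

theorem ncard_isotropicTuples_dotProductBilin (hk : ringChar k ≠ 2) (hι : Fintype.card ι = 5)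
    (m : ℕ) :
    ((isotropicTuples (dotProductBilin k k : LinearMap.BilinForm k (ι → k)) ⊥ m).ncard : ℤ) =
      (Nat.card k + 1) * (Nat.card k ^ 2 + 1) * (Nat.card k ^ m - 1) *
        (Nat.card k ^ m + 1 - Nat.card k) + 1 := by
  have hsymm := isSymm_dotProductBilin k ι
  have hiso : Nat.card k * {w : ι → k | w ⬝ᵥ w = 0}.ncard = Nat.card (ι → k) := by
    rw [ncard_dotProduct_self_eq_zero (h := 2) hk hι, Nat.card_fun,
      Nat.card_eq_fintype_card (α := ι), hι]
    ring
  exact ncard_isotropicTuples_bot hsymm.isRefl (fun U hU ↦ ncard_isotropicVectors_sdiff_add (h := 2)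
      (Ring.two_ne_zero hk) (nondegenerate_dotProductBilin k ι) hsymm (by simpa using hι) hiso hU) m

theorem count_five_tuples_general (hk : ringChar k ≠ 2) :
    {(x, y, z, w, u) : K × K × K × K × K |
        x ^ 2 + y ^ 2 + z ^ 2 + w ^ 2 + u ^ 2 = 0 ∧
        x ^ (Nat.card k + 1) + y ^ (Nat.card k + 1) + z ^ (Nat.card k + 1) +
          w ^ (Nat.card k + 1) + u ^ (Nat.card k + 1) = 0 ∧
        x ^ (Nat.card k ^ 2 + 1) + y ^ (Nat.card k ^ 2 + 1) + z ^ (Nat.card k ^ 2 + 1) +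
          w ^ (Nat.card k ^ 2 + 1) + u ^ (Nat.card k ^ 2 + 1) = 0}.ncard =
      (Nat.card k + 1) * (Nat.card k ^ 2 + 1) * (Nat.card K - 1) *
        (Nat.card K + 1 - Nat.card k) + 1 := by
  have hle : Nat.card k ≤ Nat.card K :=
    Nat.card_le_card_of_injective _ (FaithfulSMul.algebraMap_injective k K)
  have hpos : 1 ≤ Nat.card K := Nat.card_pos
  have hcount := ncard_isotropicTuples_dotProductBilin (ι := Fin 5) hk (by simp) (finrank k K)
  have hK : (Nat.card K : ℤ) = Nat.card k ^ finrank k K := by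
    rw [Module.natCard_eq_pow_finrank (K := k) (V := K), Nat.cast_pow]
  rw [← ncard_forall_sum_pow_eq_zero (s := 3) (by simp), ← hK] at hcount
  zify [hpos, hle.trans (Nat.le_succ _)]
  rw [← hcount, Nat.cast_inj]
  refine Set.ncard_congr (fun p _ ↦ ![p.1, p.2.1, p.2.2.1, p.2.2.2.1, p.2.2.2.2]) ?_ ?_ ?_
  · rintro ⟨x, y, z, w, u⟩ ⟨h0, h1, h2⟩ j hj
    interval_cases j <;> simpa [Fin.sum_univ_five]
  · rintro ⟨x, y, z, w, u⟩ ⟨x', y', z', w', u'⟩ - - h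
    simpa using h
  · intro x hx
    refine ⟨(x 0, x 1, x 2, x 3, x 4), ⟨?_, ?_, ?_⟩, by ext i; fin_cases i <;> rfl⟩
    · simpa [Fin.sum_univ_five] using hx 0 (by simp)
    · simpa [Fin.sum_univ_five] using hx 1 (by simp)
    · simpa [Fin.sum_univ_five] using hx 2 (by simp)

end FiniteField

theorem count_five_tuples (m : ℕ) (hm : 0 < m) :
    letI : Fact (Nat.Prime 3) := ⟨by norm_num⟩
    {(x, y, z, w, u) : GaloisField 3 m × GaloisField 3 m × GaloisField 3 m ×
        GaloisField 3 m × GaloisField 3 m |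
        x ^ 2 + y ^ 2 + z ^ 2 + w ^ 2 + u ^ 2 = 0 ∧
        x ^ 4 + y ^ 4 + z ^ 4 + w ^ 4 + u ^ 4 = 0 ∧
        x ^ 10 + y ^ 10 + z ^ 10 + w ^ 10 + u ^ 10 = 0}.ncard =
      5 * (3 ^ m - 1) * (8 * 3 ^ m - 16) + 1 := by
  have : Fact (Nat.Prime 3) := ⟨by norm_num⟩
  have h := count_five_tuples_general (k := ZMod 3) (K := GaloisField 3 m)
    (by simp [ZMod.ringChar_zmod_n])
  rw [GaloisField.card 3 m hm.ne', Nat.card_zmod] at h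
  refine h.trans ?_
  rw [show 8 * 3 ^ m - 16 = 8 * (3 ^ m + 1 - 3) by lia]
  ring
end

section
/- Let p be a prime with p ≡ 3 (mod 4), m a positive integer, and q = p^m. If x, y ∈ F_q satisfy x² + y² = 0, x^{p+1} + y^{p+1} = 0, and x^{p²+1} + y^{p²+1} = 0, then x = 0 and y = 0. -/
theorem pow_eq_pow_of_pow_eq_neg_pow {M : Type*} [Monoid M] [HasDistribNeg M] {a b : ℕ}
    (hab : 2 * a ∣ b) {x y : M} (h : x ^ a = -y ^ a) : x ^ b = y ^ b := by
  obtain ⟨k, rfl⟩ := hab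
  calc x ^ (2 * a * k) = ((x ^ a) ^ 2) ^ k := by rw [mul_comm 2 a, pow_mul, pow_mul]
    _ = ((y ^ a) ^ 2) ^ k := by rw [h, neg_sq]
    _ = y ^ (2 * a * k) := by rw [mul_comm 2 a, pow_mul, pow_mul]

theorem only_zero_solution_general {R : Type*} [Ring R] [IsReduced R]
    (htwo : IsLeftRegular (2 : R)) {a b : ℕ} (hab : 2 * a ∣ b) {x y : R}
    (ha : x ^ a + y ^ a = 0) (hb : x ^ b + y ^ b = 0) : x = 0 ∧ y = 0 := by
  have hxy : x ^ b = y ^ b :=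
    pow_eq_pow_of_pow_eq_neg_pow hab (eq_neg_of_add_eq_zero_left ha)
  have hy : y ^ b = 0 := htwo.mul_left_eq_zero_iff.mp (by rw [two_mul, ← hb, hxy])
  exact ⟨eq_zero_of_pow_eq_zero (hxy.trans hy), eq_zero_of_pow_eq_zero hy⟩

theorem only_zero_solution (p : ℕ) [Fact p.Prime] (hp4 : p % 4 = 3)
    (m : ℕ) (hm : 0 < m) (x y : GaloisField p m)
    (h1 : x ^ 2 + y ^ 2 = 0)
    (h2 : x ^ (p + 1) + y ^ (p + 1) = 0)
    (h3 : x ^ (p ^ 2 + 1) + y ^ (p ^ 2 + 1) = 0) :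
    x = 0 ∧ y = 0 := by
  have two_ne_zero : (2 : GaloisField p m) ≠ 0 :=
    Ring.two_ne_zero (by rw [ringChar.eq (GaloisField p m) p]; omega)
  exact only_zero_solution_general (IsRegular.of_ne_zero two_ne_zero).left (by omega) h1 h2
end

section
/- Let p be a prime with p ≡ 3 (mod 4), m a positive integer, and q = p^m. Then the number of pairs (x,y) ∈ F_q² satisfying x² + y² + 1 = 0, x^{p+1} + y^{p+1} + 1 = 0, and x^{p²+1} + y^{p²+1} + 1 = 0 equals p + 1. -/
/-!
Let `σ` be the `q`-power map. If `x² + y² + 1 = 0`, then `v = (x, y, 1)` and `σ v` are both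
isotropic for the dot product, and `x^(q+1) + y^(q+1) + 1 = 0` says that they are orthogonal. The
dot product is nondegenerate, so in dimension three it has no totally isotropic plane: `v` and `σ v`
are proportional, hence equal because of their last coordinate. Thus `x` and `y` lie in `F_q`, where
all three equations become `x² + y² + 1 = 0`, and the points of this conic over `F_q` are counted by
a Jacobi sum when `q` is odd; when `q` is even, squaring is a bijection.
-/

open Finset ZMod

section Counting

theorem card_filter_add_eq_sum {α β M : Type*} [Fintype α] [Fintype β] [AddGroup M] [Fintype M]
    [DecidableEq M] (f : α → M) (g : β → M) (c : M) :
    #{z : α × β | f z.1 + g z.2 = c} = ∑ b, #{x | f x = c - b} * #{y | g y = b} := by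
  rw [card_eq_sum_card_fiberwise (f := fun z ↦ g z.2) (t := univ) (by simp)]
  refine sum_congr rfl fun b _ ↦ ?_
  rw [← card_product]
  congr 1
  ext ⟨x, y⟩
  simp +contextual [eq_sub_iff_add_eq]

theorem sum_mulChar_sub_mul_mulChar {R R' : Type*} [CommRing R] [Fintype R] [CommRing R']
    (χ ψ : MulChar R R') (c : Rˣ) :
    ∑ a, χ (c - a) * ψ a = χ c * ψ c * jacobiSum ψ χ := by
  rw [jacobiSum, mul_sum, ← Equiv.sum_comp c.mulLeft]
  refine sum_congr rfl fun a _ ↦ ?_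
  rw [Units.mulLeft_apply, ← mul_one_sub, map_mul, map_mul]
  ring

variable {F : Type*} [Field F] [Fintype F] [DecidableEq F]

theorem sum_quadraticChar_sub_mul_quadraticChar (hF : ringChar F ≠ 2) {c : F} (hc : c ≠ 0) :
    ∑ a, quadraticChar F (c - a) * quadraticChar F a = -quadraticChar F (-1) := by
  have hJ := jacobiSum_nontrivial_inv (quadraticChar_ne_one hF)
  rw [(quadraticChar_isQuadratic F).inv] at hJ
  have h := sum_mulChar_sub_mul_mulChar (quadraticChar F) (quadraticChar F) (Units.mk0 c hc)
  rwa [Units.val_mk0, hJ, ← sq, quadraticChar_sq_one hc, one_mul] at h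

theorem card_sq_add_sq_eq_of_ringChar_ne_two (hF : ringChar F ≠ 2) {c : F} (hc : c ≠ 0) :
    (#{z : F × F | z.1 ^ 2 + z.2 ^ 2 = c} : ℤ) = Fintype.card F - quadraticChar F (-1) := by
  have hsqrt (a : F) : (#{x : F | x ^ 2 = a} : ℤ) = quadraticChar F a + 1 := by
    simpa using quadraticChar_card_sqrts hF a
  have hsum := quadraticChar_sum_zero hF
  have hsum' : ∑ a, quadraticChar F (c - a) = 0 := by
    rw [← hsum, ← (Equiv.subLeft c).sum_comp (quadraticChar F)]
    rfl
  calc (#{z : F × F | z.1 ^ 2 + z.2 ^ 2 = c} : ℤ)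
    _ = ∑ a, (quadraticChar F (c - a) + 1) * (quadraticChar F a + 1) := by
      simp [card_filter_add_eq_sum (fun x : F ↦ x ^ 2) (fun y ↦ y ^ 2) c, hsqrt]
    _ = ∑ a, quadraticChar F (c - a) * quadraticChar F a + ∑ a, quadraticChar F (c - a) +
          ∑ a, quadraticChar F a + Fintype.card F := by
      simp only [add_mul, mul_add, mul_one, one_mul, sum_add_distrib, sum_const, card_univ,
        nsmul_eq_mul]
      ring
    _ = Fintype.card F - quadraticChar F (-1) := by
      rw [sum_quadraticChar_sub_mul_quadraticChar hF hc, hsum, hsum']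
      ring

theorem card_sq_add_sq_eq_of_ringChar_eq_two (hF : ringChar F = 2) (c : F) :
    #{z : F × F | z.1 ^ 2 + z.2 ^ 2 = c} = Fintype.card F := by
  have : CharP F 2 := ringChar.of_eq hF
  have hsqrt (a : F) : #{x : F | x ^ 2 = a} = 1 := by
    obtain ⟨r, rfl⟩ := FiniteField.isSquare_of_char_two hF a
    simp [← sq, CharTwo.sq_inj, filter_eq']
  simp [card_filter_add_eq_sum (fun x : F ↦ x ^ 2) (fun y ↦ y ^ 2) c, hsqrt]

theorem card_sq_add_sq_eq {c : F} (hc : c ≠ 0) :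
    (#{z : F × F | z.1 ^ 2 + z.2 ^ 2 = c} : ℤ) = Fintype.card F - χ₄ (Fintype.card F) := by
  by_cases hF : ringChar F = 2
  · have hχ : χ₄ (Fintype.card F) = 0 := by
      rw [χ₄_nat_eq_if_mod_four, if_pos (FiniteField.even_card_of_char_two hF)]
    rw [card_sq_add_sq_eq_of_ringChar_eq_two hF, hχ, sub_zero]
  · rw [card_sq_add_sq_eq_of_ringChar_ne_two hF hc, quadraticChar_neg_one hF]

end Counting

theorem eq_of_isotropic_of_orthogonal {R : Type*} [CommRing R] [IsReduced R] {x y u v : R}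
    (hxy : x ^ 2 + y ^ 2 + 1 = 0) (huv : u ^ 2 + v ^ 2 + 1 = 0) (horth : x * u + y * v + 1 = 0) :
    u = x ∧ v = y := by
  -- Lagrange: `(xv - yu)² = (x² + y²)(u² + v²) - (xu + yv)² = (-1)(-1) - (-1)² = 0`.
  have hdet : x * v - y * u = 0 := by
    refine pow_eq_zero_iff two_ne_zero |>.1 ?_
    linear_combination (u ^ 2 + v ^ 2) * hxy - huv - (x * u + y * v - 1) * horth
  constructor
  · linear_combination u * hxy - x * horth + y * hdet
  · linear_combination v * hxy - y * horth - x * hdet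

section FixedPoints

variable {F R : Type*} [Field F] [Fintype F] [CommRing R] [IsDomain R] [Algebra F R]

open Polynomial in
theorem pow_card_eq_self_iff_mem_range_algebraMap {x : R} :
    x ^ Fintype.card F = x ↔ x ∈ Set.range (algebraMap F R) := by
  refine ⟨fun hx ↦ ?_, ?_⟩
  · have hsplits : (X ^ Fintype.card F - X : F[X]).Splits := by
      simpa using (FiniteField.isSplittingField_sub F F).splits
    exact hsplits.mem_range_of_isRoot (FiniteField.X_pow_card_sub_X_ne_zero F Fintype.one_lt_card)
      (by simp [hx])
  · rintro ⟨a, rfl⟩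
    rw [← map_pow, FiniteField.pow_card]

theorem mem_range_algebraMap_of_sq_add_sq_of_pow_card {x y : R} (h : x ^ 2 + y ^ 2 + 1 = 0)
    (hcard : x ^ (Fintype.card F + 1) + y ^ (Fintype.card F + 1) + 1 = 0) :
    x ∈ Set.range (algebraMap F R) ∧ y ∈ Set.range (algebraMap F R) := by
  have hfrob : (x ^ Fintype.card F) ^ 2 + (y ^ Fintype.card F) ^ 2 + 1 = 0 := by
    simpa only [map_add, map_pow, map_one, map_zero, FiniteField.frobeniusAlgHom_apply] using
      congrArg (FiniteField.frobeniusAlgHom F R) h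
  obtain ⟨hx, hy⟩ := eq_of_isotropic_of_orthogonal h hfrob (by linear_combination hcard)
  exact ⟨pow_card_eq_self_iff_mem_range_algebraMap.1 hx,
    pow_card_eq_self_iff_mem_range_algebraMap.1 hy⟩

theorem sq_add_sq_and_pow_card_iff_exists_algebraMap {x y : R} :
    (x ^ 2 + y ^ 2 + 1 = 0 ∧
      x ^ (Fintype.card F + 1) + y ^ (Fintype.card F + 1) + 1 = 0 ∧
      x ^ (Fintype.card F ^ 2 + 1) + y ^ (Fintype.card F ^ 2 + 1) + 1 = 0) ↔
    ∃ a b : F, a ^ 2 + b ^ 2 = -1 ∧ algebraMap F R a = x ∧ algebraMap F R b = y := by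
  have hconic (a b : F) :
      algebraMap F R a ^ 2 + algebraMap F R b ^ 2 + 1 = 0 ↔ a ^ 2 + b ^ 2 = -1 := by
    rw [← add_eq_zero_iff_eq_neg, ← map_eq_zero_iff _ (algebraMap F R).injective]
    simp only [map_add, map_pow, map_one]
  constructor
  · rintro ⟨h, hcard, -⟩
    obtain ⟨⟨a, rfl⟩, b, rfl⟩ := mem_range_algebraMap_of_sq_add_sq_of_pow_card h hcard
    exact ⟨a, b, (hconic a b).1 h, rfl, rfl⟩
  · rintro ⟨a, b, hab, rfl, rfl⟩
    have hpow (c : F) : algebraMap F R c ^ Fintype.card F = algebraMap F R c :=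
      pow_card_eq_self_iff_mem_range_algebraMap.2 ⟨c, rfl⟩
    have hpow' (c : F) : algebraMap F R c ^ Fintype.card F ^ 2 = algebraMap F R c := by
      rw [sq, pow_mul, hpow, hpow]
    simpa only [pow_succ _ (Fintype.card F), pow_succ _ (Fintype.card F ^ 2), hpow, hpow', ← sq,
      and_self] using (hconic a b).2 hab

end FixedPoints

theorem count_pairs_general (F R : Type*) [Field F] [Fintype F] [CommRing R] [IsDomain R]
    [Algebra F R] :
    ({(x, y) : R × R |
        x ^ 2 + y ^ 2 + 1 = 0 ∧
        x ^ (Fintype.card F + 1) + y ^ (Fintype.card F + 1) + 1 = 0 ∧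
        x ^ (Fintype.card F ^ 2 + 1) + y ^ (Fintype.card F ^ 2 + 1) + 1 = 0}.ncard : ℤ) =
      Fintype.card F - χ₄ (Fintype.card F) := by
  have : DecidableEq F := Classical.decEq F
  have hinj := (algebraMap F R).injective
  have himage : {(x, y) : R × R |
        x ^ 2 + y ^ 2 + 1 = 0 ∧
        x ^ (Fintype.card F + 1) + y ^ (Fintype.card F + 1) + 1 = 0 ∧
        x ^ (Fintype.card F ^ 2 + 1) + y ^ (Fintype.card F ^ 2 + 1) + 1 = 0} =
      Prod.map (algebraMap F R) (algebraMap F R) ''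
        ({z : F × F | z.1 ^ 2 + z.2 ^ 2 = -1} : Finset (F × F)) := by
    ext ⟨x, y⟩
    simp [sq_add_sq_and_pow_card_iff_exists_algebraMap (F := F)]
  rw [himage, Set.ncard_image_of_injective _ (hinj.prodMap hinj), Set.ncard_coe_finset,
    card_sq_add_sq_eq (neg_ne_zero.2 one_ne_zero)]

theorem count_pairs (p : ℕ) [Fact p.Prime] (hp4 : p % 4 = 3)
    (m : ℕ) (hm : 0 < m) :
    {(x, y) : GaloisField p m × GaloisField p m |
        x ^ 2 + y ^ 2 + 1 = 0 ∧
        x ^ (p + 1) + y ^ (p + 1) + 1 = 0 ∧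
        x ^ (p ^ 2 + 1) + y ^ (p ^ 2 + 1) + 1 = 0}.ncard = p + 1 := by
  have h := count_pairs_general (ZMod p) (GaloisField p m)
  rw [ZMod.card, χ₄_nat_three_mod_four hp4, sub_neg_eq_add] at h
  exact_mod_cast h
end

section
/- Let p be an odd prime, m a positive integer, and q = p^m. If x, y ∈ F_q satisfy x^{p+1} + y^{p+1} + 1 = 0 and x^{p²+1} + y^{p²+1} + 1 = 0, then x^{p³} = x and y^{p³} = y (that is, x and y lie in the subfield F_{p³} of an algebraic closure). -/
/-!
Write `v = (x, y, 1)` and let `v', v'', v'''` be its successive images under the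
coordinatewise Frobenius `z ↦ z ^ Q`, where `Q` is a power of the characteristic `p`.
The two hypotheses say that `v` is orthogonal to `v'` and `v''`; applying Frobenius to them shows
that `v'''` is orthogonal to `v'` and `v''` as well. Over a field, the orthogonal complement of
`v'` and `v''` is a line unless `v' = v''`, so either `v''' = v` or `v' = v''`, and the latter
forces `v = v'` because Frobenius is injective.

The alternative can be expressed without a case distinction as `(x''' - x) * (x'' - x') = 0`.
Since `x'' - x' = (x' - x) ^ Q` and `x' - x` divides `x''' - x`, this makes `x''' - x` nilpotent,
hence zero in a reduced ring.
-/

theorem eq_zero_of_dvd_of_mul_pow_eq_zero {M : Type*} [CommMonoidWithZero M] [IsReduced M]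
    {u e : M} {n : ℕ} (hdvd : u ∣ e) (h : e * u ^ n = 0) : e = 0 := by
  have e_pow : e ^ (n + 1) = 0 := by
    rw [pow_succ']
    exact zero_dvd_iff.mp (h ▸ mul_dvd_mul_left e (pow_dvd_pow_of_dvd hdvd n))
  exact eq_zero_of_pow_eq_zero e_pow

section CommRing

variable {R : Type*} [CommRing R]

theorem sub_mul_sub_eq_zero_of_orthogonal {a a' b b' c c' d d' : R}
    (hab : a * b + a' * b' + 1 = 0) (hac : a * c + a' * c' + 1 = 0)
    (hdb : d * b + d' * b' + 1 = 0) (hdc : d * c + d' * c' + 1 = 0) :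
    (d - a) * (c - b) = 0 := by
  have sub_eq_mul_minor : c - b = a' * (b * c' - b' * c) := by
    linear_combination c * hab - b * hac
  have sub_mul_minor : (d - a) * (b * c' - b' * c) = 0 := by
    linear_combination c' * (hdb - hab) - b' * (hdc - hac)
  rw [sub_eq_mul_minor, mul_left_comm, sub_mul_minor, mul_zero]

theorem map_map_map_eq_self_of_orthogonal [IsReduced R] {q : ℕ} {φ : R →+* R}
    (hφ : ∀ z, φ z = z ^ q) {x y : R}
    (h₁ : x * φ x + y * φ y + 1 = 0) (h₂ : x * φ (φ x) + y * φ (φ y) + 1 = 0) :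
    φ (φ (φ x)) = x := by
  have h₁_map : φ x * φ (φ x) + φ y * φ (φ y) + 1 = 0 := by
    simpa only [map_add, map_mul, map_one, map_zero] using congrArg φ h₁
  have h₁_map_map : φ (φ x) * φ (φ (φ x)) + φ (φ y) * φ (φ (φ y)) + 1 = 0 := by
    simpa only [map_add, map_mul, map_one, map_zero] using congrArg φ h₁_map
  have h₂_map : φ x * φ (φ (φ x)) + φ y * φ (φ (φ y)) + 1 = 0 := by
    simpa only [map_add, map_mul, map_one, map_zero] using congrArg φ h₂
  have sub_mul_pow_eq_zero : (φ (φ (φ x)) - x) * (φ x - x) ^ q = 0 := by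
    rw [← hφ, map_sub]
    refine sub_mul_sub_eq_zero_of_orthogonal h₁ h₂ ?_ ?_ (d' := φ (φ (φ y)))
    · simpa only [mul_comm] using h₂_map
    · simpa only [mul_comm] using h₁_map_map
  have sub_dvd_sub : φ x - x ∣ φ (φ (φ x)) - x := by
    simpa only [hφ, pow_one, pow_three, pow_mul]
      using dvd_pow_pow_sub_self_of_dvd (one_dvd 3) (r := x) (p := q)
  exact sub_eq_zero.mp (eq_zero_of_dvd_of_mul_pow_eq_zero sub_dvd_sub sub_mul_pow_eq_zero)

theorem mem_subfield_p_cubed_general [IsReduced R] (p : ℕ) [ExpChar R p] (n : ℕ) {x y : R}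
    (h₁ : x ^ (p ^ n + 1) + y ^ (p ^ n + 1) + 1 = 0)
    (h₂ : x ^ ((p ^ n) ^ 2 + 1) + y ^ ((p ^ n) ^ 2 + 1) + 1 = 0) :
    x ^ (p ^ n) ^ 3 = x ∧ y ^ (p ^ n) ^ 3 = y := by
  let φ := iterateFrobenius R p n
  have map_eq_pow (z : R) : φ z = z ^ p ^ n := iterateFrobenius_def p n z
  have map_map_eq_pow (z : R) : φ (φ z) = z ^ (p ^ n) ^ 2 := by
    rw [map_eq_pow, map_eq_pow, ← pow_mul, ← sq]
  have map_map_map_eq_pow (z : R) : φ (φ (φ z)) = z ^ (p ^ n) ^ 3 := by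
    rw [map_map_eq_pow, map_eq_pow, ← pow_mul, ← pow_succ']
  have h₁_frob : x * φ x + y * φ y + 1 = 0 := by
    simpa only [map_eq_pow, ← pow_succ'] using h₁
  have h₂_frob : x * φ (φ x) + y * φ (φ y) + 1 = 0 := by
    simpa only [map_map_eq_pow, ← pow_succ'] using h₂
  rw [← map_map_map_eq_pow, ← map_map_map_eq_pow]
  exact ⟨map_map_map_eq_self_of_orthogonal map_eq_pow h₁_frob h₂_frob,
    map_map_map_eq_self_of_orthogonal map_eq_pow
      (by rwa [add_comm (y * _)]) (by rwa [add_comm (y * _)])⟩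

end CommRing

theorem mem_subfield_p_cubed (p : ℕ) [Fact p.Prime] (hodd : Odd p)
    (m : ℕ) (hm : 0 < m) (x y : GaloisField p m)
    (h2 : x ^ (p + 1) + y ^ (p + 1) + 1 = 0)
    (h3 : x ^ (p ^ 2 + 1) + y ^ (p ^ 2 + 1) + 1 = 0) :
    x ^ p ^ 3 = x ∧ y ^ p ^ 3 = y := by
  simpa only [pow_one] using mem_subfield_p_cubed_general p 1
    (by simpa only [pow_one] using h2) (by simpa only [pow_one] using h3)
end

section
/- Let L be a finite field of odd characteristic in which −1 is a square. Let a, s, t ∈ L with s ≠ 0, s² = a, and t² = −1. Then for every pair (x,y) ∈ L² with x² + y² = a there exists θ ∈ L ∖ {0} such that x = (1/2)·s·(θ + θ^{−1}) and y = (1/2)·s·t·(θ − θ^{−1}). -/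
/-!
Since `t ^ 2 = -1`, the form splits as `x ^ 2 + y ^ 2 = (x - t * y) * (x + t * y)`, so the circle
`x ^ 2 + y ^ 2 = s ^ 2` is the hyperbola `u * v = s ^ 2` in the coordinates `u = x - t * y`,
`v = x + t * y`. The points of the hyperbola are the pairs `(s * θ, s * θ⁻¹)`, and the stated
formulas solve `x - t * y = s * θ`, `x + t * y = s * θ⁻¹` for `x` and `y`.
-/

theorem exists_units_eq_mul_and_eq_mul_inv {M : Type*} [CommMonoid M] {s : Mˣ} {u v : M}
    (huv : u * v = s ^ 2) : ∃ θ : Mˣ, u = s * θ ∧ v = s * ↑θ⁻¹ := by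
  have hmul : ↑s⁻¹ * u * (↑s⁻¹ * v) = 1 := by
    rw [mul_mul_mul_comm, huv, sq, mul_mul_mul_comm, Units.inv_mul, one_mul]
  exact ⟨Units.mkOfMulEqOne _ _ hmul, (s.mul_inv_cancel_left u).symm,
    (s.mul_inv_cancel_left v).symm⟩

section CommRing

variable {R : Type*} [CommRing R] {t : R}

theorem sub_mul_mul_add_mul_eq_sq_add_sq (ht : t ^ 2 = -1) (x y : R) :
    (x - t * y) * (x + t * y) = x ^ 2 + y ^ 2 := by
  linear_combination -y ^ 2 * ht

theorem sum_of_two_squares_param_general [Invertible (2 : R)] {a x y : R} {s : Rˣ}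
    (hs : (s : R) ^ 2 = a) (ht : t ^ 2 = -1) (hxy : x ^ 2 + y ^ 2 = a) :
    ∃ θ : Rˣ, x = ⅟2 * s * (θ + ↑θ⁻¹) ∧ y = ⅟2 * s * t * (θ - ↑θ⁻¹) := by
  have hsplit : (x - t * y) * (x + t * y) = s ^ 2 := by
    rw [sub_mul_mul_add_mul_eq_sq_add_sq ht, hxy, hs]
  obtain ⟨θ, hsub, hadd⟩ := exists_units_eq_mul_and_eq_mul_inv hsplit
  refine ⟨θ, ?_, ?_⟩
  · calc
      x = ⅟2 * (2 * x) := (invOf_mul_cancel_left 2 x).symm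
      _ = ⅟2 * ((x - t * y) + (x + t * y)) := by ring
      _ = ⅟2 * s * (θ + ↑θ⁻¹) := by rw [hsub, hadd]; ring
  · calc
      y = ⅟2 * (2 * y) := (invOf_mul_cancel_left 2 y).symm
      _ = ⅟2 * (t * ((x - t * y) - (x + t * y))) := by linear_combination 2 * ⅟2 * y * ht
      _ = ⅟2 * s * t * (θ - ↑θ⁻¹) := by rw [hsub, hadd]; ring

end CommRing

theorem sum_of_two_squares_param (L : Type*) [Field L] [Finite L]
    (hchar : Odd (ringChar L)) (hsq : IsSquare (-1 : L))
    (a s t : L) (hs : s ≠ 0) (hs2 : s ^ 2 = a) (ht : t ^ 2 = -1)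
    (x y : L) (hxy : x ^ 2 + y ^ 2 = a) :
    ∃ θ : L, θ ≠ 0 ∧ x = (1 / 2) * s * (θ + θ⁻¹) ∧ y = (1 / 2) * s * t * (θ - θ⁻¹) := by
  let _ := invertibleOfNonzero (Ring.two_ne_zero (hchar.ne_two_of_dvd_nat dvd_rfl) : (2 : L) ≠ 0)
  obtain ⟨θ, hθ⟩ := sum_of_two_squares_param_general (s := Units.mk0 s hs) hs2 ht hxy
  exact ⟨θ, θ.ne_zero, by simpa using hθ⟩
end

section
/- Let p = 3, m a positive integer, and q = 3^m. Then every 5-tuple (x,y,z,w,u) ∈ F_q⁵ satisfying x²+y²+z²+w²+u² = 0, x⁴+y⁴+z⁴+w⁴+u⁴ = 0, and x^{10}+y^{10}+z^{10}+w^{10}+u^{10} = 0 has at least one coordinate equal to zero. -/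
/-!
Let `v ∈ K⁵` be a solution with coordinates in a field of characteristic `3`, and let `φ` be the
coordinatewise Frobenius. The three equations say that `v`, `φ v`, `φ² v` span a totally isotropic
subspace `W` for the dot product. Such a subspace of `K⁵` has dimension at most `2`, so the three
vectors are dependent and `W` is stable under `φ`. By descent the vectors of `W` with entries in
`𝔽₃` form a self-orthogonal ternary code that is nonzero in every coordinate where `v` is nonzero.
Self-orthogonality makes every weight a multiple of `3`, hence at most `3`. If `v` had no zero
coordinate, a codeword would have weight `10 / 3` on average, a contradiction.
-/

open Module Submodule Finset

section Krylov

section Semiring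

variable {R V : Type*} [Semiring R] [AddCommMonoid V] [Module R V] {σ : R →+* R}

/-- The Krylov subspace spanned by the first `k` vectors `v, φ v, …, φ^(k-1) v` of the orbit of
`v` under a semilinear map `φ`. -/
def krylov (φ : V →ₛₗ[σ] V) (v : V) (k : ℕ) : Submodule R V :=
  span R ((φ^[·] v) '' Set.Iio k)

theorem iterate_mem_krylov (φ : V →ₛₗ[σ] V) (v : V) {j k : ℕ} (h : j < k) :
    φ^[j] v ∈ krylov φ v k :=
  subset_span ⟨j, h, rfl⟩

theorem krylov_succ (φ : V →ₛₗ[σ] V) (v : V) (k : ℕ) :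
    krylov φ v (k + 1) = span R {φ^[k] v} ⊔ krylov φ v k := by
  rw [krylov, krylov, ← span_union, ← Set.image_singleton (f := (φ^[·] v)), ← Set.image_union,
    Set.singleton_union, ← Order.succ_eq_add_one, Set.Iio_insert, Order.Iio_succ]

theorem map_mem_krylov_succ (φ : V →ₛₗ[σ] V) (v : V) {k : ℕ} {w : V} (hw : w ∈ krylov φ v k) :
    φ w ∈ krylov φ v (k + 1) := by
  suffices krylov φ v k ≤ (krylov φ v (k + 1)).comap φ from this hw
  rw [krylov, span_le]
  rintro _ ⟨j, hj, rfl⟩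
  simpa [Function.iterate_succ_apply'] using
    iterate_mem_krylov φ v (Nat.succ_lt_succ (Set.mem_Iio.mp hj))

theorem krylov_succ_eq_of_iterate_mem {φ : V →ₛₗ[σ] V} {v : V} {k : ℕ}
    (h : φ^[k] v ∈ krylov φ v k) : krylov φ v (k + 1) = krylov φ v k := by
  rw [krylov_succ, sup_eq_right, span_singleton_le_iff_mem]
  exact h

end Semiring

variable {K V : Type*} [DivisionRing K] [AddCommGroup V] [Module K V] {σ : K →+* K}

theorem linearIndepOn_iterate_of_iterate_notMem {φ : V →ₛₗ[σ] V} {v : V} {k : ℕ}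
    (h : φ^[k] v ∉ krylov φ v k) : LinearIndepOn K (φ^[·] v) (Set.Iio k) := by
  induction k with
  | zero => simp
  | succ k ih =>
    have hk : φ^[k] v ∉ krylov φ v k := fun hmem ↦ h <| by
      rw [Function.iterate_succ_apply']
      exact map_mem_krylov_succ φ v hmem
    rw [← Order.succ_eq_add_one, Order.Iio_succ, ← Set.Iio_insert]
    exact (ih hk).insert hk

theorem finrank_krylov_of_iterate_notMem {φ : V →ₛₗ[σ] V} {v : V} {k : ℕ}
    (h : φ^[k] v ∉ krylov φ v k) : finrank K (krylov φ v k) = k := by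
  rw [krylov, Set.image_eq_range,
    finrank_span_eq_card (linearIndepOn_iterate_of_iterate_notMem h).linearIndependent]
  simp

theorem map_mem_krylov_of_finrank_lt {φ : V →ₛₗ[σ] V} {v : V} {k : ℕ}
    (hk : finrank K (krylov φ v k) < k) {w : V} (hw : w ∈ krylov φ v k) :
    φ w ∈ krylov φ v k := by
  have hmem : φ^[k] v ∈ krylov φ v k := by
    by_contra h
    exact hk.ne (finrank_krylov_of_iterate_notMem h)
  exact krylov_succ_eq_of_iterate_mem hmem ▸ map_mem_krylov_succ φ v hw

end Krylov

section SelfOrthogonal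

variable {ι : Type*} [Fintype ι]

/-- A subspace of `R^ι` is self-orthogonal if the dot product vanishes identically on it. -/
def IsSelfOrthogonal {R : Type*} [CommSemiring R] (W : Submodule R (ι → R)) : Prop :=
  ∀ x ∈ W, ∀ y ∈ W, x ⬝ᵥ y = 0

theorem isSelfOrthogonal_span {R : Type*} [CommSemiring R] {s : Set (ι → R)}
    (hs : ∀ x ∈ s, ∀ y ∈ s, x ⬝ᵥ y = 0) : IsSelfOrthogonal (span R s) := by
  intro x hx y hy
  induction hx, hy using span_induction₂ with
  | mem_mem x y hx hy => exact hs x hx y hy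
  | zero_left y _ => exact zero_dotProduct y
  | zero_right x _ => exact dotProduct_zero x
  | add_left x y z _ _ _ hxz hyz => rw [add_dotProduct, hxz, hyz, add_zero]
  | add_right x y z _ _ _ hxy hxz => rw [dotProduct_add, hxy, hxz, add_zero]
  | smul_left r x y _ _ hxy => rw [smul_dotProduct, hxy, smul_zero]
  | smul_right r x y _ _ hxy => rw [dotProduct_smul, hxy, smul_zero]

theorem IsSelfOrthogonal.two_mul_finrank_le {K : Type*} [Field K] {W : Submodule K (ι → K)}
    (hW : IsSelfOrthogonal W) : 2 * finrank K W ≤ Fintype.card ι := by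
  classical
  let B : LinearMap.BilinForm K (ι → K) := Matrix.toBilin' 1
  have hB : B.Nondegenerate :=
    LinearMap.BilinForm.nondegenerate_toBilin'_of_det_ne_zero' 1 (by simp)
  have hle : W ≤ B.orthogonal W := fun y hy x hx ↦ by
    simpa [B, Matrix.toBilin'_apply'] using hW x hx y hy
  have hfinrank := finrank_mono hle
  have hWι : finrank K W ≤ Fintype.card ι := by simpa using finrank_le W
  rw [LinearMap.BilinForm.finrank_orthogonal hB, finrank_fintype_fun_eq_card] at hfinrank
  lia

end SelfOrthogonal

section Coordwise

/-- The `σ`-semilinear endomorphism of `R^ι` applying `σ` to each coordinate. -/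
def coordwise (ι : Type*) {R : Type*} [Semiring R] (σ : R →+* R) : (ι → R) →ₛₗ[σ] (ι → R) where
  __ := σ.compLeft ι
  map_smul' a w := funext fun i ↦ map_mul σ a (w i)

@[simp]
theorem coordwise_apply {ι R : Type*} [Semiring R] (σ : R →+* R) (w : ι → R) (i : ι) :
    coordwise ι σ w i = σ (w i) :=
  rfl

theorem coordwise_dotProduct_coordwise {ι R : Type*} [Fintype ι] [Semiring R] (σ : R →+* R)
    (x y : ι → R) : coordwise ι σ x ⬝ᵥ coordwise ι σ y = σ (x ⬝ᵥ y) :=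
  (σ.map_dotProduct x y).symm

theorem isSelfOrthogonal_krylov_coordwise {ι R : Type*} [Fintype ι] [CommSemiring R] {σ : R →+* R}
    {v : ι → R} {k : ℕ} (hv : ∀ j < k, v ⬝ᵥ (coordwise ι σ)^[j] v = 0) :
    IsSelfOrthogonal (krylov (coordwise ι σ) v k) := by
  have horbit : ∀ i j, j < k → (coordwise ι σ)^[i] v ⬝ᵥ (coordwise ι σ)^[i + j] v = 0 := by
    intro i j hj
    induction i with
    | zero => simpa using hv j hj
    | succ i ih =>
      rw [Nat.succ_add, Function.iterate_succ_apply', Function.iterate_succ_apply',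
        coordwise_dotProduct_coordwise, ih, map_zero]
  apply isSelfOrthogonal_span
  rintro _ ⟨i, hi, rfl⟩ _ ⟨j, hj, rfl⟩
  rw [Set.mem_Iio] at hi hj
  rcases le_total i j with hij | hji
  · simpa [hij] using horbit i (j - i) (by lia)
  · simpa [hji, dotProduct_comm] using horbit j (i - j) (by lia)

/- A vector `u` of minimal weight among those with `u i = 1` is fixed: otherwise subtracting a
multiple of `coordwise ι σ u - u`, which vanishes at `i`, would clear a further coordinate. -/
theorem exists_mem_coordwise_eq_self {ι K : Type*} [Finite ι] [DivisionRing K] {σ : K →+* K}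
    {W : Submodule K (ι → K)} (hW : ∀ w ∈ W, coordwise ι σ w ∈ W) {w : ι → K} (hw : w ∈ W) {i : ι}
    (hi : w i ≠ 0) : ∃ u ∈ W, u i = 1 ∧ coordwise ι σ u = u := by
  classical
  have := Fintype.ofFinite ι
  obtain ⟨u, ⟨huW, hui⟩, hmin⟩ := exists_minimalFor_of_wellFoundedLT
    (fun u : ι → K ↦ u ∈ W ∧ u i = 1) hammingNorm
    ⟨(w i)⁻¹ • w, W.smul_mem _ hw, by simp [hi]⟩
  refine ⟨u, huW, hui, sub_eq_zero.mp ?_⟩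
  by_contra hd
  set d := coordwise ι σ u - u
  obtain ⟨j, hj⟩ := Function.ne_iff.mp hd
  have hdi : d i = 0 := by simp [d, hui]
  have hd_of_u : ∀ l, u l = 0 → d l = 0 := fun l hl ↦ by simp [d, hl]
  let u' := u - (u j / d j) • d
  have hu'W : u' ∈ W := W.sub_mem huW (W.smul_mem _ (W.sub_mem (hW u huW) huW))
  have hu'i : u' i = 1 := by simp [u', hui, hdi]
  have hlt : hammingNorm u' < hammingNorm u := by
    refine card_lt_card (ssubset_iff_of_subset ?_ |>.mpr ⟨j, ?_, ?_⟩)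
    · exact monotone_filter_right _ fun l _ hl hul ↦ hl (by simp [u', hul, hd_of_u l hul])
    · simpa using mt (hd_of_u j) hj
    · have hj' : d j ≠ 0 := hj
      simp [u', hj']
  exact (hmin ⟨hu'W, hu'i⟩ hlt.le).not_gt hlt

end Coordwise

section SubfieldSubcode

variable {ι F K : Type*} [Field F] [Field K] [Algebra F K]

/-- The subfield subcode over `F` of a linear code `W` over `K`: the words with entries in `F`
that lie in `W`. -/
def subfieldSubcode (F : Type*) [Field F] [Algebra F K] (W : Submodule K (ι → K)) :
    Submodule F (ι → F) :=
  (W.restrictScalars F).comap ((Algebra.linearMap F K).compLeft ι)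

theorem mem_subfieldSubcode {W : Submodule K (ι → K)} {c : ι → F} :
    c ∈ subfieldSubcode F W ↔ algebraMap F K ∘ c ∈ W :=
  Iff.rfl

theorem IsSelfOrthogonal.subfieldSubcode [Fintype ι] {W : Submodule K (ι → K)}
    (hW : IsSelfOrthogonal W) : IsSelfOrthogonal (subfieldSubcode F W) := by
  intro c hc d hd
  apply (algebraMap F K).injective
  rw [RingHom.map_dotProduct, map_zero]
  exact hW _ (mem_subfieldSubcode.mp hc) _ (mem_subfieldSubcode.mp hd)

theorem exists_mem_subfieldSubcode_apply_ne_zero [Finite ι] {σ : K →+* K}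
    (hσ : ∀ a, σ a = a → a ∈ (algebraMap F K).range) {W : Submodule K (ι → K)}
    (hW : ∀ w ∈ W, coordwise ι σ w ∈ W) {w : ι → K} (hw : w ∈ W) {i : ι} (hi : w i ≠ 0) :
    ∃ c ∈ subfieldSubcode F W, c i ≠ 0 := by
  obtain ⟨u, huW, hui, hfixed⟩ := exists_mem_coordwise_eq_self hW hw hi
  choose c hc using fun l ↦ hσ (u l) (congrFun hfixed l)
  obtain rfl : algebraMap F K ∘ c = u := funext hc
  refine ⟨c, mem_subfieldSubcode.mpr huW, fun hci ↦ ?_⟩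
  simp [hci] at hui

theorem exists_isSelfOrthogonal_apply_ne_zero [Fintype ι] {σ : K →+* K}
    (hσ : ∀ a, σ a = a → a ∈ (algebraMap F K).range) {v : ι → K} {k : ℕ}
    (hk : Fintype.card ι < 2 * k) (hv : ∀ j < k, v ⬝ᵥ (coordwise ι σ)^[j] v = 0) :
    ∃ C : Submodule F (ι → F), IsSelfOrthogonal C ∧ ∀ i, v i ≠ 0 → ∃ c ∈ C, c i ≠ 0 := by
  have hself := isSelfOrthogonal_krylov_coordwise hv
  have hrank : finrank K (krylov (coordwise ι σ) v k) < k := by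
    have := hself.two_mul_finrank_le
    lia
  have hvmem : v ∈ krylov (coordwise ι σ) v k := iterate_mem_krylov _ v (j := 0) (by lia)
  exact ⟨_, hself.subfieldSubcode, fun i ↦ exists_mem_subfieldSubcode_apply_ne_zero hσ
    (fun w ↦ map_mem_krylov_of_finrank_lt hrank) hvmem⟩

end SubfieldSubcode

section Frobenius

variable {K : Type*} [Field K] (p : ℕ) [Fact p.Prime] [CharP K p]

theorem mem_range_algebraMap_of_frobenius_eq_self [Algebra (ZMod p) K] {a : K}
    (ha : frobenius K p a = a) : a ∈ (algebraMap (ZMod p) K).range := by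
  obtain ⟨n, rfl⟩ := (mem_bot_iff_intCast p K).mp
    ((Subfield.mem_bot_iff_pow_eq_self K p).mpr ha)
  exact intCast_mem _ n

theorem dotProduct_iterate_coordwise_frobenius {ι : Type*} [Fintype ι] (v : ι → K) (j : ℕ) :
    v ⬝ᵥ (coordwise ι (frobenius K p))^[j] v = ∑ i, v i ^ (p ^ j + 1) := by
  have hiterate (i : ι) : (coordwise ι (frobenius K p))^[j] v i = v i ^ p ^ j := by
    induction j with
    | zero => simp
    | succ j ih =>
      rw [Function.iterate_succ_apply', coordwise_apply, ih, frobenius_def, pow_succ, pow_mul]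
  simp only [dotProduct, hiterate, pow_succ']

theorem exists_isSelfOrthogonal_of_sum_pow_eq_zero {ι : Type*} [Fintype ι] {v : ι → K} {k : ℕ}
    (hk : Fintype.card ι < 2 * k) (hv : ∀ j < k, ∑ i, v i ^ (p ^ j + 1) = 0) :
    ∃ C : Submodule (ZMod p) (ι → ZMod p),
      IsSelfOrthogonal C ∧ ∀ i, v i ≠ 0 → ∃ c ∈ C, c i ≠ 0 := by
  let _ : Algebra (ZMod p) K := ZMod.algebra K p
  refine exists_isSelfOrthogonal_apply_ne_zero
    (fun _ ↦ mem_range_algebraMap_of_frobenius_eq_self p) hk fun j hj ↦ ?_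
  rw [dotProduct_iterate_coordwise_frobenius, hv j hj]

end Frobenius

section AverageWeight

variable {F : Type*} [Field F] [Fintype F] [DecidableEq F]

theorem card_mul_card_ne_zero_eq {V : Type*} [AddCommGroup V] [Module F V] [Fintype V]
    {f : V →ₗ[F] F} (hf : f ≠ 0) :
    Fintype.card F * #{x | f x ≠ 0} = (Fintype.card F - 1) * Fintype.card V := by
  have hquot : Nat.card (V ⧸ f.ker) = Fintype.card F := by
    rw [Nat.card_congr (f.quotKerEquivOfSurjective (f.surjective hf)).toEquiv,
      Nat.card_eq_fintype_card]
  have hker : Nat.card f.ker = #{x | f x = 0} := Nat.subtype_card _ (by simp)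
  have hV : Fintype.card V = #{x | f x = 0} * Fintype.card F := by
    rw [← hker, ← hquot, ← card_eq_card_quotient_mul_card, Nat.card_eq_fintype_card]
  have hsplit : #{x | f x = 0} + #{x | f x ≠ 0} = Fintype.card V :=
    card_filter_add_card_filter_not _
  obtain ⟨r, hr⟩ := Nat.exists_eq_succ_of_ne_zero (Fintype.card_ne_zero (α := F))
  have hne : #{x | f x ≠ 0} = #{x | f x = 0} * r := by
    rw [hV, hr, Nat.mul_succ] at hsplit
    lia
  rw [hne, hV, hr, Nat.succ_sub_one]
  ring

theorem card_mul_sum_hammingNorm {ι : Type*} [Fintype ι] (C : Submodule F (ι → F)) [Fintype C]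
    (hC : ∀ i, ∃ c ∈ C, c i ≠ 0) :
    Fintype.card F * ∑ c : C, hammingNorm (c : ι → F) =
      Fintype.card ι * ((Fintype.card F - 1) * Fintype.card C) := by
  have hcoord (i : ι) : Fintype.card F * #{c : C | c.1 i ≠ 0} =
      (Fintype.card F - 1) * Fintype.card C := by
    obtain ⟨c, hc, hci⟩ := hC i
    refine card_mul_card_ne_zero_eq (f := LinearMap.proj i ∘ₗ C.subtype) fun h ↦ hci ?_
    exact LinearMap.congr_fun h ⟨c, hc⟩
  calc Fintype.card F * ∑ c : C, hammingNorm (c : ι → F)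
      = Fintype.card F * ∑ i, #{c : C | c.1 i ≠ 0} := by
        simp only [hammingNorm, card_filter]
        rw [sum_comm]
    _ = Fintype.card ι * ((Fintype.card F - 1) * Fintype.card C) := by
        simp [mul_sum, hcoord]

theorem exists_mem_le_card_mul_hammingNorm {ι : Type*} [Fintype ι] (C : Submodule F (ι → F))
    (hC : ∀ i, ∃ c ∈ C, c i ≠ 0) :
    ∃ c ∈ C, Fintype.card ι * (Fintype.card F - 1) ≤ Fintype.card F * hammingNorm c := by
  classical
  have := Fintype.ofFinite C
  by_contra! h
  have hlt := sum_lt_sum_of_nonempty univ_nonempty fun c _ ↦ h (c : C) c.2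
  rw [← mul_sum, card_mul_sum_hammingNorm C hC] at hlt
  simp [mul_comm, mul_assoc] at hlt

end AverageWeight

theorem dotProduct_self_eq_hammingNorm {ι : Type*} [Fintype ι] (c : ι → ZMod 3) :
    c ⬝ᵥ c = hammingNorm c := by
  have hsq : ∀ a : ZMod 3, a * a = if a ≠ 0 then 1 else 0 := by decide
  simp only [dotProduct, hammingNorm, hsq, sum_boole]

theorem five_tuple_has_zero_coordinate_general {K : Type*} [Field K] [CharP K 3] {x y z w u : K}
    (h₂ : x ^ 2 + y ^ 2 + z ^ 2 + w ^ 2 + u ^ 2 = 0)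
    (h₄ : x ^ 4 + y ^ 4 + z ^ 4 + w ^ 4 + u ^ 4 = 0)
    (h₁₀ : x ^ 10 + y ^ 10 + z ^ 10 + w ^ 10 + u ^ 10 = 0) :
    x = 0 ∨ y = 0 ∨ z = 0 ∨ w = 0 ∨ u = 0 := by
  have : Fact (Nat.Prime 3) := ⟨Nat.prime_three⟩
  have hsum : ∀ j < 3, ∑ i, ![x, y, z, w, u] i ^ (3 ^ j + 1) = 0 := by
    intro j hj
    interval_cases j <;> simpa [Fin.sum_univ_five]
  by_contra! hne
  obtain ⟨C, hself, hC⟩ := exists_isSelfOrthogonal_of_sum_pow_eq_zero 3 (by simp) hsum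
  obtain ⟨c, hc, hweight⟩ := exists_mem_le_card_mul_hammingNorm C fun i ↦
    hC i (by fin_cases i <;> simp [hne])
  have hdvd : 3 ∣ hammingNorm c := by
    rw [← ZMod.natCast_eq_zero_iff, ← dotProduct_self_eq_hammingNorm]
    exact hself c hc c hc
  have hle : hammingNorm c ≤ 5 := hammingNorm_le_card_fintype
  simp only [Fintype.card_fin, ZMod.card] at hweight
  lia

theorem five_tuple_has_zero_coordinate (m : ℕ) (hm : 0 < m) :
    letI : Fact (Nat.Prime 3) := ⟨by norm_num⟩
    ∀ x y z w u : GaloisField 3 m,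
      x ^ 2 + y ^ 2 + z ^ 2 + w ^ 2 + u ^ 2 = 0 →
      x ^ 4 + y ^ 4 + z ^ 4 + w ^ 4 + u ^ 4 = 0 →
      x ^ 10 + y ^ 10 + z ^ 10 + w ^ 10 + u ^ 10 = 0 →
      x = 0 ∨ y = 0 ∨ z = 0 ∨ w = 0 ∨ u = 0 := by
  intro x y z w u h₂ h₄ h₁₀
  exact five_tuple_has_zero_coordinate_general h₂ h₄ h₁₀
end

section
/- Let p = 3, m a positive integer, and q = 3^m. A 4-tuple (x,y,z,w) ∈ F_q⁴ satisfies x² + y² − z² − w² = 0, x⁴ + y⁴ − z⁴ − w⁴ = 0, and x^{10} + y^{10} − z^{10} − w^{10} = 0 if and only if ((x = z or x = −z) and (y = w or y = −w)) or ((x = w or x = −w) and (y = z or y = −z)). -/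
/-!
When `2 ≠ 0` and there are no zero divisors, the sum and the sum of squares of two elements
determine the pair up to order. Applied to `x ^ 2`, `y ^ 2` and `z ^ 2`, `w ^ 2`, this shows that
the equations of degrees two and four already determine `x` and `y` up to order and signs; every
equation of even degree then follows.
-/

theorem eq_and_eq_or_eq_and_eq_of_add_eq_of_sq_add_sq_eq {R : Type*} [CommRing R]
    [NoZeroDivisors R] (h2 : (2 : R) ≠ 0) {a b c d : R} (hadd : a + b = c + d)
    (hsq : a ^ 2 + b ^ 2 = c ^ 2 + d ^ 2) :
    (a = c ∧ b = d) ∨ (a = d ∧ b = c) := by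
  have hprod : (a - c) * (a - d) = 0 := by
    refine (mul_eq_zero.mp ?_).resolve_left h2
    linear_combination (a - b - c - d) * hadd + hsq
  rcases mul_eq_zero.mp hprod with hac | had
  · exact Or.inl ⟨sub_eq_zero.mp hac, by linear_combination hadd - hac⟩
  · exact Or.inr ⟨sub_eq_zero.mp had, by linear_combination hadd - had⟩

theorem pow_add_pow_sub_pow_sub_pow_eq_zero_of_even {R : Type*} [Ring R] {n : ℕ} (hn : Even n)
    {x y z w : R}
    (h : ((x = z ∨ x = -z) ∧ (y = w ∨ y = -w)) ∨ ((x = w ∨ x = -w) ∧ (y = z ∨ y = -z))) :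
    x ^ n + y ^ n - z ^ n - w ^ n = 0 := by
  rcases h with ⟨rfl | rfl, rfl | rfl⟩ | ⟨rfl | rfl, rfl | rfl⟩ <;> simp [hn.neg_pow]

theorem four_tuple_mixed_signs_iff_general {R : Type*} [CommRing R] [NoZeroDivisors R]
    (h2 : (2 : R) ≠ 0) (x y z w : R) :
    (x ^ 2 + y ^ 2 - z ^ 2 - w ^ 2 = 0 ∧ x ^ 4 + y ^ 4 - z ^ 4 - w ^ 4 = 0) ↔
      (((x = z ∨ x = -z) ∧ (y = w ∨ y = -w)) ∨
       ((x = w ∨ x = -w) ∧ (y = z ∨ y = -z))) := by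
  constructor
  · rintro ⟨hsq, hfour⟩
    simp only [← sq_eq_sq_iff_eq_or_eq_neg]
    exact eq_and_eq_or_eq_and_eq_of_add_eq_of_sq_add_sq_eq h2
      (by linear_combination hsq) (by linear_combination hfour)
  · intro h
    exact ⟨pow_add_pow_sub_pow_sub_pow_eq_zero_of_even even_two h,
      pow_add_pow_sub_pow_sub_pow_eq_zero_of_even (by decide) h⟩

theorem four_tuple_mixed_signs_iff (m : ℕ) (hm : 0 < m) :
    letI : Fact (Nat.Prime 3) := ⟨by norm_num⟩
    ∀ x y z w : GaloisField 3 m,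
      (x ^ 2 + y ^ 2 - z ^ 2 - w ^ 2 = 0 ∧
       x ^ 4 + y ^ 4 - z ^ 4 - w ^ 4 = 0 ∧
       x ^ 10 + y ^ 10 - z ^ 10 - w ^ 10 = 0) ↔
      (((x = z ∨ x = -z) ∧ (y = w ∨ y = -w)) ∨
       ((x = w ∨ x = -w) ∧ (y = z ∨ y = -z))) := by
  intro x y z w
  have h2 : (2 : GaloisField 3 m) ≠ 0 := Ring.two_ne_zero (by simp [ringChar.eq _ 3])
  rw [← and_assoc, four_tuple_mixed_signs_iff_general h2, and_iff_left_of_imp]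
  exact pow_add_pow_sub_pow_sub_pow_eq_zero_of_even (by decide)
end
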